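/- arXiv:2603.13491 — 8 statements merged into one kernel-verified Lean document; each statement's English description precedes it below -/
import Mathlib

section
/- Let p and s be real numbers with s ≥ p ≥ 2 and let h : ℝ^d → ℝ be defined by h(z) = ‖z‖_p^s. Then for all z_a, z_b ∈ ℝ^d, ⟨∇h(z_a) − ∇h(z_b), z_a − z_b⟩ ≥ (4s/2^s)·‖z_a − z_b‖_p^s. Equivalently, the symmetrized Bregman divergence of h satisfies ω_h(z_a, z_b) + ω_h(z_b, z_a) ≥ (4s/2^s)·‖z_a − z_b‖_p^s. -/
open RealInnerProductSpace

/-- The ℓ_p norm on ℝ^d : `‖z‖_p = (Σ_i |z_i|^p)^(1/p)`. -/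
noncomputable def lpnorm {d : ℕ} (p : ℝ) (z : EuclideanSpace ℝ (Fin d)) : ℝ :=
  (∑ i, |z i| ^ p) ^ (1 / p)

theorem aux_half (r x y : ℝ) (hr : 1 ≤ r) (hx : 0 ≤ x) (hy : 0 ≤ y) :
    (1 / 2 * x + 1 / 2 * y) ^ r ≤ 1 / 2 * x ^ r + 1 / 2 * y ^ r := by
  have hc := (convexOn_rpow hr).right (Set.mem_Ici.2 hx) (Set.mem_Ici.2 hy)
    (by norm_num : (0 : ℝ) ≤ 1 / 2) (by norm_num : (0 : ℝ) ≤ 1 / 2) (by norm_num)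
  simpa only [smul_eq_mul] using hc

theorem aux_scalar_pos (p m v : ℝ) (hp : 2 ≤ p) (hv : 0 < v) (hm : 0 ≤ m) :
    2 * v ^ p ≤ |m + v| ^ (p - 2) * (m + v) * v - |m - v| ^ (p - 2) * (m - v) * v := by
  have key : ∀ t : ℝ, 0 ≤ t → |t| ^ (p - 2) * t = t ^ (p - 1) := by
    intro t ht
    rw [abs_of_nonneg ht]
    rcases ht.eq_or_lt with h | h
    · rw [← h, mul_zero, Real.zero_rpow (by linarith)]
    · rw [← Real.rpow_add_one h.ne']; congr 1; ring
  have e1 : v ^ p = v ^ (p - 1) * v := by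
    rw [← Real.rpow_add_one hv.ne']; congr 1; ring
  rw [e1, key (m + v) (by linarith)]
  rcases le_total m v with h | h
  · have e2 : |m - v| ^ (p - 2) * (m - v) = - (v - m) ^ (p - 1) := by
      rw [← key (v - m) (by linarith), abs_sub_comm]; ring
    rw [e2]
    have hc := aux_half (p - 1) (m + v) (v - m) (by linarith) (by linarith) (by linarith)
    have e3 : (1 / 2 * (m + v) + 1 / 2 * (v - m) : ℝ) = v := by ring
    rw [e3] at hc
    nlinarith
  · rw [key (m - v) (by linarith)]
    have h1 := Real.add_rpow_le_rpow_add (a := m - v) (b := 2 * v) (p := p - 1)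
      (by linarith) (by linarith) (by linarith)
    have e3 : m - v + 2 * v = m + v := by ring
    rw [e3, Real.mul_rpow (by norm_num) hv.le] at h1
    have h2 : (2 : ℝ) ^ (1 : ℝ) ≤ 2 ^ (p - 1) :=
      Real.rpow_le_rpow_of_exponent_le (by norm_num) (by linarith)
    rw [Real.rpow_one] at h2
    have h3 : 0 < v ^ (p - 1) := Real.rpow_pos_of_pos hv _
    have h4 : 2 * v ^ (p - 1) ≤ (m + v) ^ (p - 1) - (m - v) ^ (p - 1) := by nlinarith
    nlinarith

theorem aux_scalar_pos' (p m v : ℝ) (hp : 2 ≤ p) (hv : 0 < v) :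
    2 * v ^ p ≤ |m + v| ^ (p - 2) * (m + v) * v - |m - v| ^ (p - 2) * (m - v) * v := by
  rcases le_total 0 m with h | h
  · exact aux_scalar_pos p m v hp hv h
  · have := aux_scalar_pos p (-m) v hp hv (by linarith)
    have e1 : |-m + v| = |m - v| := by rw [← abs_neg]; congr 1; ring
    have e2 : |-m - v| = |m + v| := by rw [← abs_neg]; congr 1; ring
    rw [e1, e2] at this
    linarith

theorem aux_scalar (p a b : ℝ) (hp : 2 ≤ p) :
    2 * |(a - b) / 2| ^ p ≤
      |a| ^ (p - 2) * a * ((a - b) / 2) - |b| ^ (p - 2) * b * ((a - b) / 2) := by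
  rcases lt_trichotomy ((a - b) / 2) 0 with h | h | h
  · have := aux_scalar_pos' p ((a + b) / 2) (-((a - b) / 2)) hp (by linarith)
    have e1 : (a + b) / 2 + -((a - b) / 2) = b := by ring
    have e2 : (a + b) / 2 - -((a - b) / 2) = a := by ring
    rw [e1, e2] at this
    rw [abs_of_neg h]
    linarith
  · rw [h, abs_zero, Real.zero_rpow (by linarith)]; simp
  · have := aux_scalar_pos' p ((a + b) / 2) ((a - b) / 2) hp h
    have e1 : (a + b) / 2 + ((a - b) / 2) = a := by ring
    have e2 : (a + b) / 2 - ((a - b) / 2) = b := by ring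
    rw [e1, e2] at this
    rw [abs_of_pos h]
    linarith

theorem aux_neg (p q A B V P Q : ℝ) (hp : 2 ≤ p) (hq : 0 ≤ q) (hA : 0 ≤ A) (hB : 0 ≤ B)
    (hV : 0 < V) (hP : P ≤ A ^ (p - 1) * V) (hPQ : 2 * V ^ p ≤ P + Q)
    (hQ : Q < 0) (hBA : B ≤ A) : 2 * V ^ (p + q) ≤ A ^ q * P + B ^ q * Q := by
  have e1 : V ^ p = V ^ (p - 1) * V := by
    rw [← Real.rpow_add_one hV.ne']; congr 1; ring
  have h3 : 0 < V ^ (p - 1) := Real.rpow_pos_of_pos hV _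
  have h1 : V ^ (p - 1) * V ≤ A ^ (p - 1) * V := by nlinarith [mul_pos h3 hV]
  have h2 : V ^ (p - 1) ≤ A ^ (p - 1) := le_of_mul_le_mul_right h1 hV
  have h4 : V ≤ A := (Real.rpow_le_rpow_iff hV.le hA (by linarith)).1 h2
  have h5 : V ^ q ≤ A ^ q := Real.rpow_le_rpow hV.le h4 hq
  have h6 : B ^ q ≤ A ^ q := Real.rpow_le_rpow hB hBA hq
  have h7 : 0 < V ^ q := Real.rpow_pos_of_pos hV _
  have h8 : 0 < V ^ p := Real.rpow_pos_of_pos hV _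
  rw [Real.rpow_add hV]
  have h9 : A ^ q * (P + Q) ≤ A ^ q * P + B ^ q * Q := by nlinarith
  have h10 : V ^ q * (2 * V ^ p) ≤ A ^ q * (P + Q) := by gcongr
  linarith

theorem aux_one (p q A V P : ℝ) (hp : 2 ≤ p) (hq : 0 ≤ q) (hA : 0 ≤ A)
    (hV : 0 < V) (hP : P ≤ A ^ (p - 1) * V) (hP0 : 0 ≤ P) :
    V * (P / V) ^ (1 + q / (p - 1)) ≤ A ^ q * P := by
  have hX : 0 ≤ P / V := by positivity
  have hp1 : 0 < p - 1 := by linarith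
  have h1 : P / V ≤ A ^ (p - 1) := by rwa [div_le_iff₀ hV]
  have h2 : (P / V) ^ (q / (p - 1)) ≤ A ^ q := by
    calc _ ≤ (A ^ (p - 1)) ^ (q / (p - 1)) := Real.rpow_le_rpow hX h1 (by positivity)
      _ = A ^ q := by rw [← Real.rpow_mul hA]; congr 1; field_simp
  have hr : 0 ≤ q / (p - 1) := by positivity
  rw [Real.rpow_add_of_nonneg hX (by norm_num) hr, Real.rpow_one]
  have : V * (P / V * (P / V) ^ (q / (p - 1))) = (P / V) ^ (q / (p - 1)) * P := by
    field_simp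
  rw [this]
  gcongr

theorem aux_main (p q A B V P Q : ℝ) (hp : 2 ≤ p) (hq : 0 ≤ q) (hA : 0 ≤ A) (hB : 0 ≤ B)
    (hV : 0 ≤ V) (hP : P ≤ A ^ (p - 1) * V) (hQ : Q ≤ B ^ (p - 1) * V)
    (hPQ : 2 * V ^ p ≤ P + Q)
    (hBA : Q < 0 → B ≤ A) (hAB : P < 0 → A ≤ B) :
    2 * V ^ (p + q) ≤ A ^ q * P + B ^ q * Q := by
  rcases hV.eq_or_lt with h0 | hV
  · rw [← h0, Real.zero_rpow (by linarith)] at hPQ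
    rw [← h0] at hP hQ
    have hP' : P = 0 := by linarith
    have hQ' : Q = 0 := by linarith
    rw [← h0, Real.zero_rpow (by linarith), hP', hQ']
    simp
  rcases lt_or_ge Q 0 with h | hQ0
  · exact aux_neg p q A B V P Q hp hq hA hB hV hP hPQ h (hBA h)
  rcases lt_or_ge P 0 with h | hP0
  · have := aux_neg p q B A V Q P hp hq hB hA hV hQ (by linarith) h (hAB h)
    linarith
  have h1 := aux_one p q A V P hp hq hA hV hP hP0
  have h2 := aux_one p q B V Q hp hq hB hV hQ hQ0
  have hp1 : 0 < p - 1 := by linarith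
  have hr : 0 ≤ q / (p - 1) := by positivity
  have hc := aux_half (1 + q / (p - 1)) (P / V) (Q / V) (by linarith) (by positivity) (by positivity)
  have e1 : V ^ p = V ^ (p - 1) * V := by
    rw [← Real.rpow_add_one hV.ne']; congr 1; ring
  have h3 : V ^ (p - 1) ≤ 1 / 2 * (P / V) + 1 / 2 * (Q / V) := by
    have : 1 / 2 * (P / V) + 1 / 2 * (Q / V) = (P + Q) / 2 / V := by ring
    rw [this, le_div_iff₀ hV]; linarith
  have h4 : (V ^ (p - 1)) ^ (1 + q / (p - 1)) ≤
      (1 / 2 * (P / V) + 1 / 2 * (Q / V)) ^ (1 + q / (p - 1)) :=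
    Real.rpow_le_rpow (by positivity) h3 (by linarith)
  have e2 : V ^ (p + q) = V * (V ^ (p - 1)) ^ (1 + q / (p - 1)) := by
    rw [← Real.rpow_mul hV.le, mul_comm V, ← Real.rpow_add_one hV.ne']
    congr 1; field_simp; ring
  rw [e2]
  have h5 := h4.trans hc
  have h6 := mul_le_mul_of_nonneg_left h5 hV.le
  linarith

theorem aux_holder {d : ℕ} (p : ℝ) (hp : 2 ≤ p) (a v : Fin d → ℝ) :
    ∑ i, |a i| ^ (p - 2) * a i * v i ≤
      ((∑ i, |a i| ^ p) ^ (1 / p)) ^ (p - 1) * (∑ i, |v i| ^ p) ^ (1 / p) := by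
  have hpq : (p / (p - 1)).HolderConjugate p :=
    (Real.HolderConjugate.conjExponent (by linarith : 1 < p)).symm
  have := Real.inner_le_Lp_mul_Lq Finset.univ (fun i => |a i| ^ (p - 2) * a i) v hpq
  refine this.trans (le_of_eq ?_)
  have hp1 : p - 1 ≠ 0 := by linarith
  have hp0 : p ≠ 0 := by linarith
  congr 1
  have e : ∀ i, |(|a i| ^ (p - 2) * a i)| ^ (p / (p - 1)) = |a i| ^ p := by
    intro i
    rw [abs_mul, abs_of_nonneg (by positivity : 0 ≤ |a i| ^ (p - 2))]
    rcases (abs_nonneg (a i)).eq_or_lt with h | h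
    · rw [← h, mul_zero, Real.zero_rpow hp0, Real.zero_rpow (by positivity)]
    · rw [← Real.rpow_add_one h.ne', ← Real.rpow_mul h.le]
      congr 1; field_simp; ring
  simp only [e]
  rw [← Real.rpow_mul (Finset.sum_nonneg fun i _ => by positivity)]
  congr 1; field_simp

theorem aux_lt {d : ℕ} (p : ℝ) (hp : 2 ≤ p) (a b : Fin d → ℝ)
    (h : 0 < ∑ i, |b i| ^ (p - 2) * b i * ((a i - b i) / 2)) :
    (∑ i, |b i| ^ p) ^ (1 / p) ≤ (∑ i, |a i| ^ p) ^ (1 / p) := by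
  have hh := aux_holder p hp b a
  have hp0 : p ≠ 0 := by linarith
  set B := (∑ i, |b i| ^ p) ^ (1 / p) with hB
  set A := (∑ i, |a i| ^ p) ^ (1 / p)
  have hB0 : 0 ≤ B := by positivity
  rcases hB0.eq_or_lt with h0 | hB0
  · rw [← h0]; positivity
  have e : ∀ i, |b i| ^ (p - 2) * b i * b i = |b i| ^ p := by
    intro i
    rw [mul_assoc, ← abs_mul_abs_self (b i)]
    rcases (abs_nonneg (b i)).eq_or_lt with h | h
    · rw [← h, mul_zero, mul_zero, Real.zero_rpow hp0]
    · rw [← mul_assoc, ← Real.rpow_add_one h.ne', ← Real.rpow_add_one h.ne']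
      congr 1; ring
  have e2 : ∑ i, |b i| ^ p = B ^ (p - 1) * B := by
    rw [← Real.rpow_add_one hB0.ne', hB,
      ← Real.rpow_mul (Finset.sum_nonneg fun i _ => by positivity)]
    rw [show 1 / p * (p - 1 + 1) = 1 by field_simp; ring, Real.rpow_one]
  have e3 : ∑ i, |b i| ^ (p - 2) * b i * ((a i - b i) / 2) =
      (∑ i, |b i| ^ (p - 2) * b i * a i - ∑ i, |b i| ^ p) / 2 := by
    rw [← Finset.sum_sub_distrib, Finset.sum_div]
    refine Finset.sum_congr rfl fun i _ => ?_
    rw [← e i]; ring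
  have h3 : 0 < B ^ (p - 1) := Real.rpow_pos_of_pos hB0 _
  have : B ^ (p - 1) * B ≤ B ^ (p - 1) * A := by linarith
  exact le_of_mul_le_mul_left this h3

theorem aux_grad {d : ℕ} (p s : ℝ) (hp : 2 ≤ p) (hps : p ≤ s)
    (h : EuclideanSpace ℝ (Fin d) → ℝ) (hdef : ∀ z, h z = lpnorm p z ^ s)
    (z v : EuclideanSpace ℝ (Fin d)) :
    ⟪gradient h z, v⟫ = s * (lpnorm p z ^ (s - p) * ∑ i, |z i| ^ (p - 2) * z i * v i) := by
  have hp0 : p ≠ 0 := by linarith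
  have hnn : ∀ z : EuclideanSpace ℝ (Fin d), 0 ≤ ∑ i, |z i| ^ p :=
    fun z => Finset.sum_nonneg fun i _ => by positivity
  have hh : h = fun z => (∑ i, |z i| ^ p) ^ (s / p) := by
    funext z
    rw [hdef, lpnorm, ← Real.rpow_mul (hnn z)]
    congr 1; field_simp
  have hF : HasFDerivAt (fun z : EuclideanSpace ℝ (Fin d) => ∑ i, |z i| ^ p)
      (∑ i, (p * |z i| ^ (p - 2) * z i) • (EuclideanSpace.proj i : EuclideanSpace ℝ (Fin d) →L[ℝ] ℝ)) z := by
    refine HasFDerivAt.fun_sum fun i _ => ?_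
    exact (hasDerivAt_abs_rpow (z i) (by linarith : 1 < p)).comp_hasFDerivAt z
      (EuclideanSpace.proj i : EuclideanSpace ℝ (Fin d) →L[ℝ] ℝ).hasFDerivAt
  have hG := hF.rpow_const (p := s / p) (Or.inr (by rw [le_div_iff₀ (by linarith)]; linarith))
  have e1 : ⟪gradient h z, v⟫ = fderiv ℝ h z v := by
    rw [gradient, InnerProductSpace.toDual_symm_apply]
  rw [e1, hh, hG.fderiv, lpnorm, ← Real.rpow_mul (hnn z)]
  have e2 : 1 / p * (s - p) = s / p - 1 := by field_simp
  rw [e2]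
  simp only [ContinuousLinearMap.smul_apply, ContinuousLinearMap.sum_apply, smul_eq_mul]
  have e3 : ∑ i, p * |z i| ^ (p - 2) * z i *
      (EuclideanSpace.proj i : EuclideanSpace ℝ (Fin d) →L[ℝ] ℝ) v = p * ∑ i, |z i| ^ (p - 2) * z i * v i := by
    rw [Finset.mul_sum]; refine Finset.sum_congr rfl fun i _ => ?_
    change p * |z i| ^ (p - 2) * z i * v i = _
    ring
  rw [e3]
  field_simp

/-- For `h(z) = ‖z‖_p^s` with `s ≥ p ≥ 2`, the symmetrized Bregman divergence satisfies
`⟨∇h(z_a) − ∇h(z_b), z_a − z_b⟩ ≥ (4s/2^s)·‖z_a − z_b‖_p^s`. -/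
theorem symmetrized_bregman_lower_bound {d : ℕ} (p s : ℝ) (hp : 2 ≤ p) (hps : p ≤ s)
    (h : EuclideanSpace ℝ (Fin d) → ℝ)
    (hdef : ∀ z, h z = lpnorm p z ^ s)
    (za zb : EuclideanSpace ℝ (Fin d)) :
    ⟪gradient h za - gradient h zb, za - zb⟫ ≥
      (4 * s / 2 ^ s) * lpnorm p (za - zb) ^ s := by
  have hp0 : p ≠ 0 := by linarith
  have hdbl : ∀ z : EuclideanSpace ℝ (Fin d), ∑ i, |z i| ^ (p - 2) * z i * (za - zb) i =
      2 * ∑ i, |z i| ^ (p - 2) * z i * ((za i - zb i) / 2) := by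
    intro z
    rw [Finset.mul_sum]
    refine Finset.sum_congr rfl fun i _ => ?_
    rw [PiLp.sub_apply]; ring
  rw [inner_sub_left, aux_grad p s hp hps h hdef, aux_grad p s hp hps h hdef, hdbl, hdbl]
  have hsnn : 0 ≤ ∑ i, |(za i - zb i) / 2| ^ p := Finset.sum_nonneg fun i _ => by positivity
  set V := (∑ i, |(za i - zb i) / 2| ^ p) ^ (1 / p) with hVdef
  have hV : 0 ≤ V := by positivity
  have hD : lpnorm p (za - zb) = 2 * V := by
    have : ∑ i, |(za - zb) i| ^ p = 2 ^ p * ∑ i, |(za i - zb i) / 2| ^ p := by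
      rw [Finset.mul_sum]
      refine Finset.sum_congr rfl fun i _ => ?_
      rw [← Real.mul_rpow (by norm_num) (abs_nonneg _), PiLp.sub_apply, abs_div, abs_two]
      congr 1; ring
    rw [lpnorm, this, Real.mul_rpow (by positivity) hsnn, ← Real.rpow_mul (by norm_num),
      mul_one_div_cancel hp0, Real.rpow_one]
  set P := ∑ i, |za i| ^ (p - 2) * za i * ((za i - zb i) / 2) with hPdef
  set R := ∑ i, |zb i| ^ (p - 2) * zb i * ((za i - zb i) / 2) with hRdef
  have hVp : V ^ p = ∑ i, |(za i - zb i) / 2| ^ p := by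
    rw [hVdef, ← Real.rpow_mul hsnn, one_div_mul_cancel hp0, Real.rpow_one]
  have hP : P ≤ lpnorm p za ^ (p - 1) * V := aux_holder p hp za fun i => (za i - zb i) / 2
  have hswap : ∀ z : EuclideanSpace ℝ (Fin d),
      ∑ i, |z i| ^ (p - 2) * z i * ((zb i - za i) / 2) =
      - ∑ i, |z i| ^ (p - 2) * z i * ((za i - zb i) / 2) := by
    intro z
    rw [← Finset.sum_neg_distrib]
    exact Finset.sum_congr rfl fun i _ => by ring
  have hQ : -R ≤ lpnorm p zb ^ (p - 1) * V := by
    have := aux_holder p hp zb fun i => (zb i - za i) / 2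
    rw [hswap] at this
    have e : ∀ i, |(zb i - za i) / 2| = |(za i - zb i) / 2| := fun i => by
      rw [← abs_neg]; congr 1; ring
    simp only [e] at this
    exact this
  have hPQ : 2 * V ^ p ≤ P + -R := by
    rw [hVp, ← sub_eq_add_neg, hPdef, hRdef, ← Finset.sum_sub_distrib, Finset.mul_sum]
    exact Finset.sum_le_sum fun i _ => aux_scalar p (za i) (zb i) hp
  have hmain := aux_main p (s - p) (lpnorm p za) (lpnorm p zb) V P (-R) hp (by linarith)
    (by unfold lpnorm; positivity) (by unfold lpnorm; positivity) hV hP hQ hPQ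
    (fun h => aux_lt p hp za zb (by linarith))
    (fun h => aux_lt p hp zb za (by rw [hswap]; linarith))
  rw [show p + (s - p) = s by ring] at hmain
  rw [hD, Real.mul_rpow (by norm_num) hV]
  have h2s : (0 : ℝ) < 2 ^ s := by positivity
  have e : 4 * s / 2 ^ s * (2 ^ s * V ^ s) = 2 * s * (2 * V ^ s) := by field_simp; ring
  rw [e]
  have := mul_le_mul_of_nonneg_left hmain (by linarith : 0 ≤ 2 * s)
  linarith
end

section
/- Let p and s be real numbers with s ≥ p ≥ 2 and let h : ℝ^d → ℝ be defined by h(z) = ‖z‖_p^s. Then for all z_a, z_b ∈ ℝ^d, the Bregman divergence of h satisfies ω_h(z_b, z_a) = h(z_b) − h(z_a) − ⟨∇h(z_a), z_b − z_a⟩ ≥ (4/2^s)·‖z_b − z_a‖_p^s. -/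
open RealInnerProductSpace

lemma aux_le_of_deriv {f f' : ℝ → ℝ} {l x : ℝ} (hlx : l ≤ x)
    (hf : ∀ t, HasDerivAt f (f' t) t) (h0 : ∀ t, l < t → t < x → 0 ≤ f' t) : f l ≤ f x := by
  have hm : MonotoneOn f (Set.Icc l x) := by
    apply monotoneOn_of_deriv_nonneg (convex_Icc l x)
    · exact fun t _ => (hf t).continuousAt.continuousWithinAt
    · exact fun t _ => (hf t).differentiableAt.differentiableWithinAt
    · intro t ht
      rw [interior_Icc] at ht
      rw [(hf t).deriv]
      exact h0 t ht.1 ht.2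
  exact hm ⟨le_refl _, hlx⟩ ⟨hlx, le_refl _⟩ hlx

lemma aux_mid {r x y : ℝ} (hr : 1 ≤ r) (hx : 0 ≤ x) (hy : 0 ≤ y) :
    ((x + y) / 2) ^ r ≤ (x ^ r + y ^ r) / 2 := by
  have := (convexOn_rpow hr).2 (Set.mem_Ici.2 hx) (Set.mem_Ici.2 hy)
    (by norm_num : (0:ℝ) ≤ 1/2) (by norm_num : (0:ℝ) ≤ 1/2) (by norm_num)
  simp only [smul_eq_mul] at this
  calc ((x + y) / 2) ^ r = (1/2 * x + 1/2 * y) ^ r := by congr 1; ring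
    _ ≤ _ := this
    _ = _ := by ring

lemma aux_four {p : ℝ} (hp : 2 ≤ p) : 4 * (1 / 2 : ℝ) ^ p ≤ 1 := by
  have : (1 / 2 : ℝ) ^ p ≤ (1 / 2 : ℝ) ^ (2:ℝ) :=
    Real.rpow_le_rpow_of_exponent_ge (by norm_num) (by norm_num) hp
  norm_num at this ⊢
  linarith

/-- opposite signs -/
lemma aux_opp {p x : ℝ} (hp : 2 ≤ p) (hx : 0 ≤ x) :
    4 * ((x + 1) / 2) ^ p ≤ x ^ p - 1 + p * (x + 1) := by
  have key := aux_le_of_deriv (f := fun t => t ^ p - 1 + p * (t + 1) - 4 * ((t + 1) / 2) ^ p)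
    (f' := fun t => 1 * p * t ^ (p - 1) + p * 1 - 4 * (1 / 2 * p * ((t + 1) / 2) ^ (p - 1))) hx
    (by
      intro t
      have h1 := (hasDerivAt_id t).rpow_const (p := p) (Or.inr (by linarith))
      have h2 := ((hasDerivAt_id t).add_const (1:ℝ)).const_mul p
      have h3 := ((((hasDerivAt_id t).add_const (1:ℝ)).div_const 2).rpow_const (p := p)
        (Or.inr (by linarith))).const_mul 4
      exact ((h1.sub_const 1).add h2).sub h3)
    (by
      intro t ht _
      have := aux_mid (r := p - 1) (by linarith) ht.le zero_le_one
      rw [Real.one_rpow] at this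
      nlinarith)
  simp only [Real.zero_rpow (by linarith : p ≠ 0), zero_add] at key
  have := aux_four hp
  linarith

lemma aux_same1 {p t : ℝ} (hp : 2 ≤ p) (ht : 0 ≤ t) :
    t ^ p ≤ (1 + t) ^ p - 1 - p * t := by
  have key := aux_le_of_deriv (f := fun t => (1 + t) ^ p - 1 - p * t - t ^ p)
    (f' := fun t => 1 * p * (1 + t) ^ (p - 1) - p * 1 - 1 * p * t ^ (p - 1)) ht
    (by
      intro t
      have h1 := (hasDerivAt_id t).rpow_const (p := p) (Or.inr (by linarith))
      have h2 := (hasDerivAt_id t).const_mul p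
      have h3 := ((hasDerivAt_id t).const_add (1:ℝ)).rpow_const (p := p) (Or.inr (by linarith))
      exact ((h3.sub_const 1).sub h2).sub h1)
    (by
      intro t ht _
      have := Real.add_rpow_le_rpow_add (p := p - 1) zero_le_one ht.le (by linarith)
      rw [Real.one_rpow] at this
      nlinarith)
  simp only [Real.zero_rpow (by linarith : p ≠ 0), add_zero, Real.one_rpow] at key
  linarith

lemma aux_same2 {p t : ℝ} (hp : 2 ≤ p) (ht : 0 ≤ t) (ht1 : t ≤ 1) :
    t ^ p ≤ (1 - t) ^ p - 1 + p * t := by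
  have key := aux_le_of_deriv (f := fun t => (1 - t) ^ p - 1 + p * t - t ^ p)
    (f' := fun t => -1 * p * (1 - t) ^ (p - 1) + p * 1 - 1 * p * t ^ (p - 1)) ht
    (by
      intro t
      have h1 := (hasDerivAt_id t).rpow_const (p := p) (Or.inr (by linarith))
      have h2 := (hasDerivAt_id t).const_mul p
      have h3 := ((hasDerivAt_id t).const_sub (1:ℝ)).rpow_const (p := p) (Or.inr (by linarith))
      exact ((h3.sub_const 1).add h2).sub h1)
    (by
      intro t ht h'
      have := Real.add_rpow_le_rpow_add (p := p - 1) (by linarith : 0 ≤ 1 - t) ht.le (by linarith)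
      rw [sub_add_cancel, Real.one_rpow] at this
      nlinarith)
  simp only [Real.zero_rpow (by linarith : p ≠ 0), sub_zero, Real.one_rpow] at key
  linarith

lemma aux_norm {p x : ℝ} (hp : 2 ≤ p) :
    4 * (|x + 1| / 2) ^ p ≤ |x| ^ p - 1 + p * (x + 1) := by
  have h4 := aux_four hp
  have hs : ∀ t : ℝ, 0 ≤ t → 4 * (t / 2) ^ p ≤ t ^ p := by
    intro t ht
    rw [show t / 2 = t * (1 / 2) by ring, Real.mul_rpow ht (by norm_num)]
    nlinarith [Real.rpow_nonneg ht p]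
  rcases le_total 0 x with hx | hx
  · rw [abs_of_nonneg hx, abs_of_nonneg (by linarith)]
    exact aux_opp hp hx
  · rw [abs_of_nonpos hx]
    rcases le_total 0 (x + 1) with h1 | h1
    · rw [abs_of_nonneg h1]
      have := aux_same2 hp h1 (by linarith)
      rw [show 1 - (x + 1) = -x by ring] at this
      linarith [hs _ h1]
    · rw [abs_of_nonpos h1]
      have := aux_same1 (t := -(x+1)) hp (by linarith)
      rw [show 1 + -(x + 1) = -x by ring] at this
      linarith [hs (-(x+1)) (by linarith)]

lemma aux_1d {p : ℝ} (hp : 2 ≤ p) (a b : ℝ) :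
    4 * (|b - a| / 2) ^ p ≤ |b| ^ p - |a| ^ p - p * |a| ^ (p - 2) * a * (b - a) := by
  by_cases ha : a = 0
  · subst ha
    have h4 := aux_four hp
    simp only [sub_zero, abs_zero, Real.zero_rpow (by linarith : p ≠ 0), mul_zero, zero_mul]
    rw [show |b| / 2 = |b| * (1 / 2) by ring, Real.mul_rpow (abs_nonneg b) (by norm_num)]
    nlinarith [Real.rpow_nonneg (abs_nonneg b) p]
  · obtain ⟨x, rfl⟩ : ∃ x, b = -x * a := ⟨-b / a, by field_simp⟩
    have ha' : 0 < |a| := abs_pos.2 ha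
    have h := mul_le_mul_of_nonneg_right (aux_norm (x := x) hp) (Real.rpow_nonneg ha'.le p)
    have e1 : |(-x * a) - a| / 2 = (|x + 1| / 2) * |a| := by
      rw [show -x * a - a = -((x + 1) * a) by ring, abs_neg, abs_mul]; ring
    have e2 : |a| ^ (p - 2) * (a * a) = |a| ^ p := by
      rw [← abs_mul_abs_self a, ← pow_two, ← Real.rpow_natCast, ← Real.rpow_add ha']
      congr 1; push_cast; ring
    rw [e1, Real.mul_rpow (by positivity) ha'.le, abs_mul, abs_neg,
      Real.mul_rpow (abs_nonneg _) ha'.le]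
    calc _ = 4 * (|x + 1| / 2) ^ p * |a| ^ p := by ring
      _ ≤ _ := h
      _ = |x| ^ p * |a| ^ p - |a| ^ p + p * (|a| ^ (p - 2) * (a * a)) * (x + 1) := by
        rw [e2]; ring
      _ = _ := by ring

lemma aux_tangent {q U W : ℝ} (hq : 1 ≤ q) (hU : 0 ≤ U) (hW : 0 ≤ W) :
    0 ≤ U ^ q - W ^ q - q * W ^ (q - 1) * (U - W) := by
  rcases hW.eq_or_lt with h0 | h0
  · subst h0
    rcases hq.eq_or_lt with h1 | h1
    · subst h1; simp
    · rw [Real.zero_rpow (by linarith), Real.zero_rpow (by linarith)]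
      have := Real.rpow_nonneg hU q
      linarith
  · have hb := one_add_mul_self_le_rpow_one_add (s := U / W - 1)
      (by have : 0 ≤ U / W := by positivity
          linarith) hq
    rw [add_sub_cancel, Real.div_rpow hU hW, le_div_iff₀ (by positivity)] at hb
    have e : W ^ q = W ^ (q - 1) * W := by
      rw [← Real.rpow_add_one h0.ne']; congr 1; ring
    have e2 : (1 + q * (U / W - 1)) * W ^ q = W ^ q + q * W ^ (q - 1) * (U - W) := by
      rw [e]; field_simp
    linarith

lemma aux_scalar_s3 {q x y e : ℝ} (hq : 1 ≤ q) (hx : 0 ≤ x) (hy : 0 ≤ y) (he : 0 ≤ e)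
    (hm : e ≤ ((x + y) / 2) ^ 2) :
    4 * e ^ q ≤ (x ^ 2) ^ q - (y ^ 2) ^ q - q * (y ^ 2) ^ (q - 1) * (x ^ 2 - y ^ 2 - 4 * e) := by
  have ht := aux_tangent hq (sq_nonneg x) (sq_nonneg y)
  have h1 := aux_1d (p := 2 * q) (by linarith) (-y) x
  have sqr : ∀ t r : ℝ, 0 ≤ t → (t ^ 2) ^ r = t ^ (2 * r) := by
    intro t r h
    rw [Real.rpow_mul h]; norm_num
  rw [sub_neg_eq_add, abs_neg, abs_of_nonneg hx, abs_of_nonneg hy,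
    abs_of_nonneg (by linarith : 0 ≤ x + y), show 2 * q - 2 = 2 * (q - 1) by ring,
    ← sqr _ _ hx, ← sqr _ _ hy, ← sqr _ _ hy, ← sqr _ _ (by linarith : 0 ≤ (x + y) / 2)] at h1
  set m := ((x + y) / 2) ^ 2 with hmdef
  set Y := (y ^ 2) ^ (q - 1)
  have hYm : x ^ 2 - y ^ 2 - 4 * m = -(2 * y * (x + y)) := by rw [hmdef]; ring
  have h2 : 4 * m ^ q ≤ (x ^ 2) ^ q - (y ^ 2) ^ q - q * Y * (x ^ 2 - y ^ 2 - 4 * m) := by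
    rw [hYm]; linarith
  obtain ⟨θ, h0, h1', rfl⟩ : ∃ θ, 0 ≤ θ ∧ θ ≤ 1 ∧ e = θ * m := by
    have hm0 : 0 ≤ m := sq_nonneg _
    rcases hm0.eq_or_lt with h | h
    · exact ⟨0, le_refl _, zero_le_one, by linarith⟩
    · exact ⟨e / m, by positivity, (div_le_one h).2 hm, by field_simp⟩
  have hm0 : 0 ≤ m := sq_nonneg _
  rw [Real.mul_rpow h0 hm0]
  have hθ : θ ^ q ≤ θ := by
    simpa using Real.rpow_le_rpow_of_exponent_ge_of_imp h0 h1' hq (by intro _ h; linarith)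
  have h3 := mul_le_mul_of_nonneg_right hθ (Real.rpow_nonneg hm0 q)
  have h4 := mul_le_mul_of_nonneg_left h2 h0
  have h5 := mul_nonneg (sub_nonneg.2 h1') ht
  linarith

lemma aux_inner {d : ℕ} (p q : ℝ) (hp : 2 ≤ p) (hq : 1 ≤ q)
    (za v : EuclideanSpace ℝ (Fin d)) :
    fderiv ℝ (fun z : EuclideanSpace ℝ (Fin d) => (∑ i, |z i| ^ p) ^ q) za v
      = q * (∑ i, |za i| ^ p) ^ (q - 1) * ∑ i, p * |za i| ^ (p - 2) * za i * v i := by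
  have h1 : ∀ i ∈ Finset.univ, HasFDerivAt (fun z : EuclideanSpace ℝ (Fin d) => |z i| ^ p)
      ((p * |za i| ^ (p - 2) * za i) • (EuclideanSpace.proj i : EuclideanSpace ℝ (Fin d) →L[ℝ] ℝ))
      za := by
    intro i _
    exact (hasDerivAt_abs_rpow (za i) (by linarith : 1 < p)).comp_hasFDerivAt za
      (EuclideanSpace.proj i : EuclideanSpace ℝ (Fin d) →L[ℝ] ℝ).hasFDerivAt
  have h2 := (HasFDerivAt.fun_sum h1).rpow_const (p := q) (Or.inr hq)
  rw [h2.fderiv]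
  simp

/-- For `h(z) = ‖z‖_p^s` with `s ≥ p ≥ 2`, the Bregman divergence satisfies
`ω_h(z_b, z_a) = h(z_b) − h(z_a) − ⟨∇h(z_a), z_b − z_a⟩ ≥ (4/2^s)·‖z_b − z_a‖_p^s`. -/
theorem bregman_lower_bound {d : ℕ} (p s : ℝ) (hp : 2 ≤ p) (hps : p ≤ s)
    (h : EuclideanSpace ℝ (Fin d) → ℝ)
    (hdef : ∀ z, h z = lpnorm p z ^ s)
    (za zb : EuclideanSpace ℝ (Fin d)) :
    h zb - h za - ⟪gradient h za, zb - za⟫ ≥ (4 / 2 ^ s) * lpnorm p (zb - za) ^ s := by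
  have hp0 : 0 < p := by linarith
  obtain ⟨q, hqdef⟩ : ∃ q, q = s / p := ⟨_, rfl⟩
  have hs : s = p * q := by rw [hqdef]; field_simp
  have hq : 1 ≤ q := by rw [hqdef, le_div_iff₀ hp0]; linarith
  have hS : ∀ z : EuclideanSpace ℝ (Fin d), 0 ≤ ∑ i, |z i| ^ p := fun z =>
    Finset.sum_nonneg fun i _ => Real.rpow_nonneg (abs_nonneg _) _
  have hl : ∀ z : EuclideanSpace ℝ (Fin d), lpnorm p z ^ s = (∑ i, |z i| ^ p) ^ q := by
    intro z
    rw [lpnorm, ← Real.rpow_mul (hS z)]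
    congr 1
    rw [hqdef]; ring
  have hh : h = fun z => (∑ i, |z i| ^ p) ^ q := by
    funext z; rw [hdef, hl]
  rw [inner_gradient_left, hl, hh, aux_inner p q hp hq]
  set U := ∑ i, |zb i| ^ p with hU
  set W := ∑ i, |za i| ^ p with hW
  set T := ∑ i, |(zb - za) i| ^ p with hT
  have hU0 : 0 ≤ U := hS zb
  have hW0 : 0 ≤ W := hS za
  have hT0 : 0 ≤ T := hS (zb - za)
  have h2p : (0:ℝ) < 2 ^ p := by positivity
  set e := T / 2 ^ p with hedef
  have he : 0 ≤ e := by positivity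
  have hel : 4 / 2 ^ s * T ^ q = 4 * e ^ q := by
    rw [hedef, Real.div_rpow hT0 h2p.le, hs, Real.rpow_mul (by norm_num)]; ring
  -- separable bound
  have hsep : 4 * e ≤ U - W - ∑ i, p * |za i| ^ (p - 2) * za i * (zb - za) i := by
    rw [hedef, hT, hU, hW, Finset.sum_div, Finset.mul_sum, ← Finset.sum_sub_distrib,
      ← Finset.sum_sub_distrib]
    apply Finset.sum_le_sum
    intro i _
    have := aux_1d hp (za i) (zb i)
    rw [Real.div_rpow (abs_nonneg _) (by norm_num)] at this
    exact this
  -- Minkowski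
  have hmink : T ^ (1 / p) ≤ U ^ (1 / p) + W ^ (1 / p) := by
    have := Real.Lp_add_le Finset.univ (fun i => zb i) (fun i => - za i) (p := p) (by linarith)
    simp only [abs_neg, ← sub_eq_add_neg] at this
    exact this
  have hsq : ∀ t : ℝ, 0 ≤ t → (t ^ (1 / 2 : ℝ)) ^ 2 = t := by
    intro t ht
    rw [← Real.sqrt_eq_rpow, Real.sq_sqrt ht]
  have hroot : ∀ t : ℝ, 0 ≤ t → (t ^ (1 / p)) ^ (p / 2) = t ^ (1 / 2 : ℝ) := by
    intro t ht
    rw [← Real.rpow_mul ht]; congr 1; field_simp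
  have hm : e ≤ ((U ^ (1 / 2 : ℝ) + W ^ (1 / 2 : ℝ)) / 2) ^ 2 := by
    have h1 := aux_mid (r := p / 2) (by linarith) (Real.rpow_nonneg hU0 (1 / p))
      (Real.rpow_nonneg hW0 (1 / p))
    rw [hroot _ hU0, hroot _ hW0] at h1
    have h2 : (T ^ (1 / p) / 2) ^ (p / 2) ≤ ((U ^ (1 / p) + W ^ (1 / p)) / 2) ^ (p / 2) := by
      apply Real.rpow_le_rpow (by positivity) (by linarith) (by linarith)
    have h3 : ((T ^ (1 / p) / 2) ^ (p / 2)) ^ 2 = e := by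
      rw [← Real.rpow_natCast, ← Real.rpow_mul (by positivity), Real.div_rpow (by positivity)
        (by norm_num), ← Real.rpow_mul hT0, hedef]
      have e1 : p / 2 * ((2:ℕ):ℝ) = p := by push_cast; ring
      rw [e1, one_div_mul_cancel hp0.ne', Real.rpow_one]
    rw [← h3]
    exact pow_le_pow_left₀ (by positivity) (h2.trans h1) 2
  have hfin := aux_scalar_s3 hq (Real.rpow_nonneg hU0 (1/2)) (Real.rpow_nonneg hW0 (1/2)) he hm
  rw [hsq _ hU0, hsq _ hW0] at hfin
  have hc : 0 ≤ q * W ^ (q - 1) := by positivity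
  have := mul_le_mul_of_nonneg_left hsep hc
  rw [hel]
  simp only [ge_iff_le]
  linarith
end

section
/- Let Z ⊆ ℝ^d be a nonempty closed convex set, let h : ℝ^d → ℝ be differentiable and convex with Bregman divergence ω(z_b, z_a) = h(z_b) − h(z_a) − ⟨∇h(z_a), z_b − z_a⟩, let φ : ℝ^d → ℝ be differentiable and convex, and let z_a ∈ Z. Suppose z_c ∈ Z minimizes z' ↦ φ(z') + ω(z', z_a) over Z. Then for every z_b ∈ Z, φ(z_b) + ω(z_b, z_a) ≥ φ(z_c) + ω(z_c, z_a) + ω(z_b, z_c). -/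
open RealInnerProductSpace

/-- Tseng's lemma: if `z_c` minimizes `z' ↦ φ(z') + ω(z', z_a)` over a nonempty closed
convex set `Z`, where `ω` is the Bregman divergence of a differentiable convex `h`
and `φ` is differentiable convex, then for every `z_b ∈ Z`,
`φ(z_b) + ω(z_b, z_a) ≥ φ(z_c) + ω(z_c, z_a) + ω(z_b, z_c)`. -/
theorem tseng_lemma {d : ℕ} (Z : Set (EuclideanSpace ℝ (Fin d)))
    (hZne : Z.Nonempty) (hZclosed : IsClosed Z) (hZconv : Convex ℝ Z)
    (h φ : EuclideanSpace ℝ (Fin d) → ℝ)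
    (hhdiff : Differentiable ℝ h) (hhconv : ConvexOn ℝ Set.univ h)
    (hφdiff : Differentiable ℝ φ) (hφconv : ConvexOn ℝ Set.univ φ)
    (ω : EuclideanSpace ℝ (Fin d) → EuclideanSpace ℝ (Fin d) → ℝ)
    (hω : ∀ zb za, ω zb za = h zb - h za - ⟪gradient h za, zb - za⟫)
    (za zc : EuclideanSpace ℝ (Fin d)) (hza : za ∈ Z) (hzc : zc ∈ Z)
    (hmin : ∀ z' ∈ Z, φ zc + ω zc za ≤ φ z' + ω z' za) :
    ∀ zb ∈ Z, φ zb + ω zb za ≥ φ zc + ω zc za + ω zb zc := by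
  intro zb hzb
  set v := zb - zc with hv
  set c : ℝ := φ zb - φ zc - ⟪gradient h za, v⟫ with hc
  have hline : HasDerivAt (fun t : ℝ => zc + t • v) v 0 := by
    simpa using ((hasDerivAt_id (0 : ℝ)).smul_const v).const_add zc
  have hgrad : HasFDerivAt h (InnerProductSpace.toDual ℝ _ (gradient h zc))
      (zc + (0 : ℝ) • v) := by
    have := (hhdiff zc).hasGradientAt.hasFDerivAt
    simpa using this
  have hcomp : HasDerivAt (fun t : ℝ => h (zc + t • v)) ⟪gradient h zc, v⟫ 0 := by
    have := hgrad.comp_hasDerivAt (0 : ℝ) hline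
    simpa [Function.comp_def] using this
  have hψ : HasDerivAt (fun t : ℝ => t * c + h (zc + t • v))
      (c + ⟪gradient h zc, v⟫) 0 := by
    have h1 : HasDerivAt (fun t : ℝ => t * c) c 0 := by
      simpa using (hasDerivAt_id (0 : ℝ)).mul_const c
    exact h1.add hcomp
  have hmin0 : IsMinOn (fun t : ℝ => t * c + h (zc + t • v)) (Set.Icc 0 1) 0 := by
    intro t ht
    have heq : zc + t • v = (1 - t) • zc + t • zb := by
      rw [hv]; module
    have hmem : zc + t • v ∈ Z := by
      rw [heq]
      exact hZconv hzc hzb (by linarith [ht.2]) ht.1 (by ring)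
    have hφ : φ (zc + t • v) ≤ (1 - t) * φ zc + t * φ zb := by
      rw [heq]
      simpa using hφconv.2 (Set.mem_univ zc) (Set.mem_univ zb)
        (by linarith [ht.2]) ht.1 (by ring : (1 - t) + t = 1)
    have hm := hmin _ hmem
    rw [hω, hω] at hm
    have hin : ⟪gradient h za, zc + t • v - za⟫
        = ⟪gradient h za, zc - za⟫ + t * ⟪gradient h za, v⟫ := by
      rw [← real_inner_smul_right, ← inner_add_right]
      congr 1; module
    rw [hin] at hm
    simp only [Set.mem_ofPred_eq, zero_mul, zero_smul, add_zero, zero_add]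
    rw [hc]
    nlinarith
  have hpos : (1 : ℝ) ∈ posTangentConeAt (Set.Icc (0 : ℝ) 1) 0 := by
    have := sub_mem_posTangentConeAt_of_segment_subset
      (segment_eq_Icc (zero_le_one (α := ℝ))).subset
    simpa using this
  have key : 0 ≤ c + ⟪gradient h zc, v⟫ := by
    have := hmin0.localize.hasFDerivWithinAt_nonneg
      hψ.hasFDerivAt.hasFDerivWithinAt hpos
    simpa using this
  have hin : ⟪gradient h za, zb - za⟫
      = ⟪gradient h za, zc - za⟫ + ⟪gradient h za, v⟫ := by
    rw [← inner_add_right]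
    congr 1; rw [hv]; module
  rw [hω, hω, hω, hin]
  linarith
end

section
/- Let p ≥ 2 be real, s ≥ 1 an integer with s + 1 ≥ p, L > 0 and ν real. Let F : ℝ^d → ℝ^d, let a, b ∈ ℝ^d and let g ∈ ℝ^d satisfy: (i) ‖g − F(a)‖_{p*} ≤ (L/s!)·‖a − b‖_p^s, and (ii) g + ∇_u((2^ν L/s!)·‖u‖_p^{s+1})|_{u = a − b} = 0 (the first-order optimality condition of the regularized step). Then ‖g‖_{p*} = 2^ν·((s+1)L/s!)·‖a − b‖_p^s and consequently ‖F(a)‖_{p*} ≤ (((s+1)·2^ν + 1)·L/s!)·‖a − b‖_p^s. -/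
open RealInnerProductSpace

lemma grad_aux {d : ℕ} (p : ℝ) (hp : 2 ≤ p) (r c : ℝ) (hr : 1 ≤ r)
    (u : EuclideanSpace ℝ (Fin d)) :
    HasGradientAt (fun u : EuclideanSpace ℝ (Fin d) => c * (∑ i, |u i| ^ p) ^ r)
      (WithLp.toLp 2 (fun i => c * (r * (∑ i, |u i| ^ p) ^ (r - 1)) *
        (p * |u i| ^ (p - 2) * u i))) u := by
  rw [hasGradientAt_iff_hasFDerivAt]
  have h1 : ∀ i ∈ (Finset.univ : Finset (Fin d)), HasFDerivAt
      (fun v : EuclideanSpace ℝ (Fin d) => |v i| ^ p)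
      ((p * |u i| ^ (p - 2) * u i) • (EuclideanSpace.proj i : EuclideanSpace ℝ (Fin d) →L[ℝ] ℝ)) u := by
    intro i _
    have h2 : HasDerivAt (fun x : ℝ => |x| ^ p) (p * |u i| ^ (p - 2) * u i)
        ((EuclideanSpace.proj i : EuclideanSpace ℝ (Fin d) →L[ℝ] ℝ) u) :=
      hasDerivAt_abs_rpow (u i) (by linarith)
    exact h2.comp_hasFDerivAt u (EuclideanSpace.proj i : EuclideanSpace ℝ (Fin d) →L[ℝ] ℝ).hasFDerivAt
  have h3 := HasFDerivAt.fun_sum h1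
  have h4 := (h3.rpow_const (p := r) (Or.inr hr)).const_mul c
  refine h4.congr_fderiv ?_
  ext v
  simp [PiLp.inner_apply, Finset.mul_sum]
  refine Finset.sum_congr rfl fun i _ => ?_
  ring

lemma lp_sub_le {d : ℕ} (q : ℝ) (hq : 1 ≤ q) (x y : EuclideanSpace ℝ (Fin d)) :
    lpnorm q x ≤ lpnorm q y + lpnorm q (y - x) := by
  have h := Real.Lp_add_le Finset.univ (fun i => y i) (fun i => x i - y i) hq
  simp only [lpnorm]
  simpa [abs_sub_comm] using h

/-- If `g` approximates `F(a)` to order `s` in the dual norm and satisfies the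
first-order optimality condition of the regularized step
`g + ∇_u((2^ν L/s!)·‖u‖_p^{s+1})|_{u=a−b} = 0`, then
`‖g‖_{p*} = 2^ν·((s+1)L/s!)·‖a − b‖_p^s` and
`‖F(a)‖_{p*} ≤ (((s+1)·2^ν + 1)·L/s!)·‖a − b‖_p^s`. -/
theorem regularized_step_operator_norm_bound {d : ℕ} (p : ℝ) (hp : 2 ≤ p)
    (s : ℕ) (hs : 1 ≤ s) (hsp : p ≤ (s : ℝ) + 1) (L ν : ℝ) (hL : 0 < L)
    (F : EuclideanSpace ℝ (Fin d) → EuclideanSpace ℝ (Fin d))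
    (a b g : EuclideanSpace ℝ (Fin d))
    (hi : lpnorm (p / (p - 1)) (g - F a) ≤
      (L / (s.factorial : ℝ)) * lpnorm p (a - b) ^ (s : ℝ))
    (hii : g + gradient
        (fun u : EuclideanSpace ℝ (Fin d) =>
          (2 ^ ν * L / (s.factorial : ℝ)) * lpnorm p u ^ ((s : ℝ) + 1)) (a - b) = 0) :
    lpnorm (p / (p - 1)) g =
        2 ^ ν * (((s : ℝ) + 1) * L / (s.factorial : ℝ)) * lpnorm p (a - b) ^ (s : ℝ) ∧
      lpnorm (p / (p - 1)) (F a) ≤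
        ((((s : ℝ) + 1) * 2 ^ ν + 1) * L / (s.factorial : ℝ)) *
          lpnorm p (a - b) ^ (s : ℝ) := by
  have hp0 : 0 < p := by linarith
  have hp1 : 0 < p - 1 := by linarith
  have hq : 1 ≤ p / (p - 1) := by rw [le_div_iff₀ hp1]; linarith
  have hfac : (0 : ℝ) < s.factorial := by exact_mod_cast s.factorial_pos
  have h2 : (0 : ℝ) < 2 ^ ν := by positivity
  have hr : 1 ≤ ((s : ℝ) + 1) / p := by rw [le_div_iff₀ hp0]; linarith
  set c : ℝ := 2 ^ ν * L / (s.factorial : ℝ) with hc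
  have hc0 : 0 < c := by positivity
  have hpow : ∀ (u : EuclideanSpace ℝ (Fin d)) (t : ℝ),
      lpnorm p u ^ t = (∑ i, |u i| ^ p) ^ (t / p) := by
    intro u t
    rw [lpnorm, ← Real.rpow_mul (by positivity)]
    congr 1; ring
  have hmain : lpnorm (p / (p - 1)) g =
      2 ^ ν * (((s : ℝ) + 1) * L / (s.factorial : ℝ)) * lpnorm p (a - b) ^ (s : ℝ) := by
    simp only [hpow] at hii ⊢
    rw [(grad_aux p hp _ c hr (a - b)).gradient] at hii
    set u := a - b
    set S := ∑ i, |u i| ^ p with hS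
    have hS0 : 0 ≤ S := by positivity
    set r := ((s : ℝ) + 1) / p with hrdef
    have hg : ∀ i, |g i| ^ (p / (p - 1)) = (c * (r * S ^ (r - 1)) * p) ^ (p / (p - 1)) * |u i| ^ p := by
      intro i
      have e : g i = -(c * (r * S ^ (r - 1)) * (p * |u i| ^ (p - 2) * u i)) := by
        rw [eq_neg_of_add_eq_zero_left hii]; rfl
      have e1 : |u i| ^ (p - 2) * |u i| = |u i| ^ (p - 1) := by
        rw [← Real.rpow_add_one' (abs_nonneg _) (by linarith)]
        congr 1; ring
      have e2 : |g i| = c * (r * S ^ (r - 1)) * p * |u i| ^ (p - 1) := by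
        rw [e, abs_neg, ← e1]
        simp only [abs_mul, abs_abs]
        rw [abs_of_pos hc0, abs_of_pos hp0, abs_of_nonneg (by linarith : 0 ≤ r),
          abs_of_nonneg (by positivity : 0 ≤ S ^ (r - 1)),
          abs_of_nonneg (by positivity : 0 ≤ |u i| ^ (p - 2))]
        ring
      rw [e2, Real.mul_rpow (by positivity) (by positivity), ← Real.rpow_mul (abs_nonneg _)]
      congr 2
      field_simp
    rw [lpnorm]
    simp only [hg]
    rw [← Finset.mul_sum, ← hS, Real.mul_rpow (by positivity) hS0,
      ← Real.rpow_mul (by positivity)]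
    have e3 : p / (p - 1) * (1 / (p / (p - 1))) = 1 := by field_simp
    rw [e3, Real.rpow_one]
    have e4 : S ^ ((s : ℝ) / p) = S ^ (r - 1) * S ^ (1 / (p / (p - 1))) := by
      rw [← Real.rpow_add_of_nonneg hS0 (by linarith) (by positivity)]
      congr 1
      rw [hrdef]; field_simp; ring
    have e5 : r * p = s + 1 := by rw [hrdef]; field_simp
    rw [e4, hc]
    linear_combination (2 ^ ν * L / (s.factorial : ℝ)) * S ^ (r - 1) * S ^ (1 / (p / (p - 1))) * e5
  refine ⟨hmain, ?_⟩
  have ht := lp_sub_le _ hq (F a) g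
  rw [hmain] at ht
  refine (ht.trans (add_le_add_right hi _)).trans (le_of_eq ?_)
  ring
end

section
/- Let p ≥ 2 be real and let h : ℝ^d → ℝ be defined by h(z) = ‖z‖_p^p. Then for all z_1, z_2 ∈ ℝ^d, ‖∇h(z_1) − ∇h(z_2)‖_{p*} ≥ (p/2^{p+1})·‖z_1 − z_2‖_p^{p−1}. -/
open RealInnerProductSpace

lemma phi_nonneg_eq (p : ℝ) (hp : 2 ≤ p) (x : ℝ) (hx : 0 ≤ x) :
    |x| ^ (p - 2) * x = x ^ (p - 1) := by
  rw [abs_of_nonneg hx]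
  rcases hx.eq_or_lt with h | h
  · subst h
    rw [Real.zero_rpow (show p - 1 ≠ 0 by linarith), mul_zero]
  · rw [show p - 1 = (p - 2) + 1 by ring, Real.rpow_add_one h.ne']

lemma phi_nonpos_eq (p : ℝ) (hp : 2 ≤ p) (x : ℝ) (hx : x ≤ 0) :
    |x| ^ (p - 2) * x = -((-x) ^ (p - 1)) := by
  rw [← phi_nonneg_eq p hp (-x) (by linarith), abs_neg]; ring

lemma const_le (p : ℝ) (hp : 2 ≤ p) : (1 : ℝ) / 2 ^ (p + 1) ≤ 1 := by
  rw [div_le_one (by positivity)]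
  exact Real.one_le_rpow (by norm_num) (by linarith)

lemma pow_sub_bound (p : ℝ) (hp : 2 ≤ p) (a b : ℝ) (hb : 0 ≤ b) (hab : b ≤ a) :
    1 / 2 ^ (p + 1) * (a - b) ^ (p - 1) ≤ a ^ (p - 1) - b ^ (p - 1) := by
  have h1 := Real.add_rpow_le_rpow_add (sub_nonneg.2 hab) hb (show 1 ≤ p - 1 by linarith)
  rw [sub_add_cancel] at h1
  have h2 := Real.rpow_nonneg (sub_nonneg.2 hab) (p - 1)
  nlinarith [const_le p hp]

lemma pow_add_bound (p : ℝ) (hp : 2 ≤ p) (a b : ℝ) (ha : 0 ≤ a) (hb : 0 ≤ b) :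
    1 / 2 ^ (p + 1) * (a + b) ^ (p - 1) ≤ a ^ (p - 1) + b ^ (p - 1) := by
  wlog hab : b ≤ a generalizing a b
  · have := this b a hb ha (by linarith)
    rw [add_comm b a] at this; linarith
  have h1 : (a + b) ^ (p - 1) ≤ (2 * a) ^ (p - 1) :=
    Real.rpow_le_rpow (by linarith) (by linarith) (by linarith)
  rw [Real.mul_rpow (by norm_num) ha] at h1
  have h2 : (2 : ℝ) ^ (p - 1) ≤ 2 ^ (p + 1) :=
    Real.rpow_le_rpow_of_exponent_le (by norm_num) (by linarith)
  have h3 := Real.rpow_nonneg ha (p - 1)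
  have h4 := Real.rpow_nonneg hb (p - 1)
  have h5 : (0 : ℝ) < 2 ^ (p + 1) := by positivity
  rw [one_div, inv_mul_le_iff₀ h5]
  nlinarith

lemma phi_bound (p : ℝ) (hp : 2 ≤ p) (a b : ℝ) (hab : b ≤ a) :
    1 / 2 ^ (p + 1) * (a - b) ^ (p - 1) ≤ |a| ^ (p - 2) * a - |b| ^ (p - 2) * b := by
  rcases le_total 0 b with hb | hb
  · rw [phi_nonneg_eq p hp a (by linarith), phi_nonneg_eq p hp b hb]
    exact pow_sub_bound p hp a b hb hab
  · rw [phi_nonpos_eq p hp b hb]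
    rcases le_total 0 a with ha | ha
    · rw [phi_nonneg_eq p hp a ha]
      have := pow_add_bound p hp a (-b) ha (by linarith)
      rw [← sub_eq_add_neg] at this; linarith
    · rw [phi_nonpos_eq p hp a ha]
      have := pow_sub_bound p hp (-b) (-a) (by linarith) (by linarith)
      rw [show -b - -a = a - b by ring] at this; linarith

lemma phi_abs_bound (p : ℝ) (hp : 2 ≤ p) (a b : ℝ) :
    p / 2 ^ (p + 1) * |a - b| ^ (p - 1)
      ≤ |p * |a| ^ (p - 2) * a - p * |b| ^ (p - 2) * b| := by
  wlog hab : b ≤ a generalizing a b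
  · have := this b a (by linarith)
    rwa [abs_sub_comm b a, abs_sub_comm (p * |b| ^ (p - 2) * b)] at this
  have h1 := phi_bound p hp a b hab
  rw [abs_of_nonneg (sub_nonneg.2 hab)]
  refine le_trans ?_ (le_abs_self _)
  have := mul_le_mul_of_nonneg_left h1 (show 0 ≤ p by linarith)
  calc _ = p * (1 / 2 ^ (p + 1) * (a - b) ^ (p - 1)) := by ring
    _ ≤ _ := this
    _ = _ := by ring

lemma gradient_coord {d : ℕ} (p : ℝ) (hp : 2 ≤ p)
    (h : EuclideanSpace ℝ (Fin d) → ℝ)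
    (hdef : ∀ z, h z = lpnorm p z ^ p) (z : EuclideanSpace ℝ (Fin d)) :
    gradient h z = WithLp.toLp 2 (fun i => p * |z i| ^ (p - 2) * z i) := by
  have hh : h = fun z => ∑ i, |z i| ^ p := by
    funext z
    rw [hdef, lpnorm, ← Real.rpow_mul (Finset.sum_nonneg fun i _ => by positivity),
      one_div_mul_cancel (by linarith), Real.rpow_one]
  apply HasGradientAt.gradient
  rw [hasGradientAt_iff_hasFDerivAt, hh]
  have h1 : ∀ i ∈ Finset.univ, HasFDerivAt (fun z : EuclideanSpace ℝ (Fin d) => |z i| ^ p)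
      ((p * |z i| ^ (p - 2) * z i) • (EuclideanSpace.proj i : EuclideanSpace ℝ (Fin d) →L[ℝ] ℝ)) z := by
    intro i _
    exact (hasDerivAt_abs_rpow (z i) (show 1 < p by linarith)).comp_hasFDerivAt z
      (EuclideanSpace.proj i : EuclideanSpace ℝ (Fin d) →L[ℝ] ℝ).hasFDerivAt
  have h2 := HasFDerivAt.fun_sum h1
  have e : (InnerProductSpace.toDual ℝ (EuclideanSpace ℝ (Fin d)))
      (WithLp.toLp 2 fun i => p * |z i| ^ (p - 2) * z i) =
      ∑ i, (p * |z i| ^ (p - 2) * z i) •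
        (EuclideanSpace.proj i : EuclideanSpace ℝ (Fin d) →L[ℝ] ℝ) := by
    apply ContinuousLinearMap.ext
    intro v
    rw [InnerProductSpace.toDual_apply_apply, PiLp.inner_apply, ContinuousLinearMap.sum_apply]
    apply Finset.sum_congr rfl
    intro i _
    simp [mul_comm]
  rw [e]
  exact h2

/-- For `h(z) = ‖z‖_p^p` with `p ≥ 2`,
`‖∇h(z_1) − ∇h(z_2)‖_{p*} ≥ (p/2^{p+1})·‖z_1 − z_2‖_p^{p−1}`. -/
theorem gradient_lp_pow_p_dual_norm_lower_bound {d : ℕ} (p : ℝ) (hp : 2 ≤ p)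
    (h : EuclideanSpace ℝ (Fin d) → ℝ)
    (hdef : ∀ z, h z = lpnorm p z ^ p)
    (z₁ z₂ : EuclideanSpace ℝ (Fin d)) :
    lpnorm (p / (p - 1)) (gradient h z₁ - gradient h z₂) ≥
      (p / 2 ^ (p + 1)) * lpnorm p (z₁ - z₂) ^ (p - 1) := by
  rw [gradient_coord p hp h hdef, gradient_coord p hp h hdef]
  have hp1 : 0 < p - 1 := by linarith
  have hp0 : 0 < p := by linarith
  have hq : 0 < p / (p - 1) := by positivity
  set c : ℝ := p / 2 ^ (p + 1) with hc
  have hc0 : 0 ≤ c := by positivity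
  have hS : 0 ≤ ∑ i, |(z₁ - z₂) i| ^ p := Finset.sum_nonneg fun i _ => by positivity
  unfold lpnorm
  rw [← Real.rpow_mul hS, ge_iff_le]
  have e1 : c * (∑ i, |(z₁ - z₂) i| ^ p) ^ (1 / p * (p - 1))
      = (c ^ (p / (p - 1)) * ∑ i, |(z₁ - z₂) i| ^ p) ^ (1 / (p / (p - 1))) := by
    rw [Real.mul_rpow (by positivity) hS, ← Real.rpow_mul hc0,
      mul_one_div_cancel hq.ne', Real.rpow_one]
    congr 2
    field_simp
  rw [e1]
  apply Real.rpow_le_rpow (by positivity) _ (by positivity)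
  rw [Finset.mul_sum]
  apply Finset.sum_le_sum
  intro i _
  have e2 : c ^ (p / (p - 1)) * |(z₁ - z₂) i| ^ p
      = (c * |z₁ i - z₂ i| ^ (p - 1)) ^ (p / (p - 1)) := by
    rw [Real.mul_rpow hc0 (by positivity), ← Real.rpow_mul (abs_nonneg _),
      mul_div_cancel₀ _ hp1.ne']
    rfl
  rw [e2]
  apply Real.rpow_le_rpow (by positivity) _ hq.le
  exact phi_abs_bound p hp (z₁ i) (z₂ i)
end

section
/- Let F : ℝ^d → ℝ^d be differentiable and satisfy ⟨F(z_1) − F(z_2), z_1 − z_2⟩ ≥ −‖F(z_1) − F(z_2)‖² for all z_1, z_2 ∈ ℝ^d. Then for every z ∈ ℝ^d and every direction u ∈ ℝ^d, ⟨DF(z)u, u⟩ + ‖DF(z)u‖² ≥ 0, where DF(z) denotes the Fréchet derivative (Jacobian) of F at z. -/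
open RealInnerProductSpace

/-- If a differentiable operator `F` is `(−1)`-comonotone, i.e.
`⟨F(z_1) − F(z_2), z_1 − z_2⟩ ≥ −‖F(z_1) − F(z_2)‖²` for all `z_1, z_2`, then its
Jacobian satisfies `⟨DF(z)u, u⟩ + ‖DF(z)u‖² ≥ 0` for all `z` and directions `u`. -/
theorem comonotone_jacobian_inequality {d : ℕ}
    (F : EuclideanSpace ℝ (Fin d) → EuclideanSpace ℝ (Fin d))
    (hdiff : Differentiable ℝ F)
    (hcomono : ∀ z₁ z₂ : EuclideanSpace ℝ (Fin d),
      ⟪F z₁ - F z₂, z₁ - z₂⟫ ≥ -‖F z₁ - F z₂‖ ^ 2) :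
    ∀ z u : EuclideanSpace ℝ (Fin d),
      ⟪fderiv ℝ F z u, u⟫ + ‖fderiv ℝ F z u‖ ^ 2 ≥ 0 := by
  intro z u
  have h := ((hdiff z).hasFDerivAt.hasLineDerivAt u).tendsto_slope_zero
  have h2 := (h.inner (tendsto_const_nhds (x := u))).add (h.norm.pow 2)
  refine ge_of_tendsto h2 ?_
  filter_upwards [self_mem_nhdsWithin] with t ht
  have ht' : t ≠ 0 := ht
  have key := hcomono (z + t • u) z
  rw [add_sub_cancel_left, inner_smul_right] at key
  rw [real_inner_smul_left, norm_smul, mul_pow, norm_inv, inv_pow, Real.norm_eq_abs, sq_abs]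
  set a := F (z + t • u) - F z
  have e : t⁻¹ * ⟪a, u⟫ + (t ^ 2)⁻¹ * ‖a‖ ^ 2 = (t ^ 2)⁻¹ * (t * ⟪a, u⟫ + ‖a‖ ^ 2) := by
    field_simp
  rw [e]
  have : 0 ≤ t * ⟪a, u⟫ + ‖a‖ ^ 2 := by linarith
  positivity
end

section
/- Let F : ℝ^d → ℝ^d be differentiable and satisfy ⟨DF(z)w, w⟩ + ‖DF(z)w‖² ≥ 0 for all z, w ∈ ℝ^d. Let v, z : [0, ∞) → ℝ^d be continuously differentiable curves satisfying z(t) + F(z(t)) = v(t) and v̇(t) = −F(z(t)) for all t ≥ 0. Then the function t ↦ ‖F(z(t))‖ = ‖v(t) − z(t)‖ is non-increasing on [0, ∞). -/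
open RealInnerProductSpace

/-- If the Jacobian of a differentiable operator `F` satisfies
`⟨DF(z)w, w⟩ + ‖DF(z)w‖² ≥ 0` everywhere, then along the continuous-time
extragradient dynamics `z(t) + F(z(t)) = v(t)`, `v̇(t) = −F(z(t))`,
the function `t ↦ ‖F(z(t))‖` is non-increasing on `[0, ∞)`. -/
theorem operator_norm_nonincreasing_along_dynamics {d : ℕ}
    (F : EuclideanSpace ℝ (Fin d) → EuclideanSpace ℝ (Fin d))
    (hdiff : Differentiable ℝ F)
    (hjac : ∀ z w : EuclideanSpace ℝ (Fin d),
      ⟪fderiv ℝ F z w, w⟫ + ‖fderiv ℝ F z w‖ ^ 2 ≥ 0)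
    (v z : ℝ → EuclideanSpace ℝ (Fin d))
    (hvC1 : ContDiffOn ℝ 1 v (Set.Ici 0)) (hzC1 : ContDiffOn ℝ 1 z (Set.Ici 0))
    (hdyn1 : ∀ t : ℝ, 0 ≤ t → z t + F (z t) = v t)
    (hdyn2 : ∀ t ∈ Set.Ici (0 : ℝ), HasDerivWithinAt v (-F (z t)) (Set.Ici 0) t) :
    AntitoneOn (fun t => ‖F (z t)‖) (Set.Ici 0) := by
  have key : AntitoneOn (fun t => ‖F (z t)‖ ^ 2) (Set.Ici 0) := by
    have hFz : ContinuousOn (fun t => F (z t)) (Set.Ici 0) :=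
      hdiff.continuous.comp_continuousOn hzC1.continuousOn
    have hd : ∀ t ∈ interior (Set.Ici (0 : ℝ)), HasDerivWithinAt (fun t => ‖F (z t)‖ ^ 2)
        (2 * ⟪F (z t), fderiv ℝ F (z t) (deriv z t)⟫) (interior (Set.Ici 0)) t ∧
        2 * ⟪F (z t), fderiv ℝ F (z t) (deriv z t)⟫ ≤ 0 := by
      intro t ht
      rw [interior_Ici] at ht
      have ht0 : (0 : ℝ) < t := ht
      have hn : Set.Ici (0 : ℝ) ∈ nhds t := Ici_mem_nhds ht0
      have hz : HasDerivAt z (deriv z t) t :=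
        (((hzC1.differentiableOn (by norm_num)) t ht0.le).differentiableAt hn).hasDerivAt
      have hv : HasDerivAt v (-F (z t)) t := (hdyn2 t ht0.le).hasDerivAt hn
      have hF : HasDerivAt (fun t => F (z t)) (fderiv ℝ F (z t) (deriv z t)) t :=
        (hdiff (z t)).hasFDerivAt.comp_hasDerivAt t hz
      have hsum : HasDerivAt v (deriv z t + fderiv ℝ F (z t) (deriv z t)) t := by
        refine (hz.add hF).congr_of_eventuallyEq ?_
        filter_upwards [hn] with s hs
        exact (hdyn1 s hs).symm
      have heq := hv.unique hsum
      have hF2 : F (z t) = -(deriv z t + fderiv ℝ F (z t) (deriv z t)) := by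
        rw [← heq, neg_neg]
      refine ⟨hF.norm_sq.hasDerivWithinAt, ?_⟩
      have hj := hjac (z t) (deriv z t)
      generalize fderiv ℝ F (z t) (deriv z t) = A at *
      rw [hF2, inner_neg_left, inner_add_left, real_inner_self_eq_norm_sq, real_inner_comm]
      linarith
    exact antitoneOn_of_hasDerivWithinAt_nonpos (convex_Ici 0) (hFz.norm.pow 2)
      (fun t ht => (hd t ht).1) (fun t ht => (hd t ht).2)
  intro a ha b hb hab
  exact (sq_le_sq₀ (norm_nonneg _) (norm_nonneg _)).1 (key ha hb hab)
end

section
/- Let ρ ∈ (−1, 0] and D > 0. Let F : ℝ^d → ℝ^d be continuously differentiable and ρ-comonotone, i.e. ⟨F(z_1) − F(z_2), z_1 − z_2⟩ ≥ ρ·‖F(z_1) − F(z_2)‖² for all z_1, z_2 ∈ ℝ^d, and let z* ∈ ℝ^d with F(z*) = 0 and z_0 ∈ ℝ^d with ‖z_0 − z*‖ ≤ D. Let u, v, z : [0, ∞) → ℝ^d be continuously differentiable with u(0) = 0 and, for all t ≥ 0: u̇(t) = −F(z(t)), v(t) = z_0 + u(t), and z(t) + F(z(t)) = v(t). Then for every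 t > 0: ‖F(z(t))‖² ≤ D² / (2(2 + 2ρ)·t); in particular ‖F(z(t))‖² = O(1/t). -/
open RealInnerProductSpace

section Helpers

variable {E : Type*} [NormedAddCommGroup E] [InnerProductSpace ℝ E]

lemma quad_nonneg (f g w : E) (a b c : ℝ) :
    0 ≤ a ^ 2 * ‖g‖ ^ 2 + b ^ 2 * ‖f‖ ^ 2 + c ^ 2 * ‖w‖ ^ 2 + 2 * a * b * ⟪f, g⟫
      + 2 * a * c * ⟪g, w⟫ + 2 * b * c * ⟪f, w⟫ := by
  have h : 0 ≤ ⟪a • g + b • f + c • w, a • g + b • f + c • w⟫ := real_inner_self_nonneg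
  simp only [inner_add_left, inner_add_right, real_inner_smul_left, real_inner_smul_right,
    real_inner_self_eq_norm_sq, norm_smul, mul_pow, Real.norm_eq_abs, sq_abs] at h
  rw [real_inner_comm f g, real_inner_comm g w, real_inner_comm f w] at h
  linarith

/-- The Lyapunov function decreases. -/
lemma lyap (w f g : ℝ → E) (T : ℝ) (hT : 0 ≤ T)
    (hw : ContinuousOn w (Set.Ici 0)) (hf : ContinuousOn f (Set.Ici 0))
    (dw : ∀ t, 0 < t → HasDerivAt w (-f t) t) (df : ∀ t, 0 < t → HasDerivAt f (g t) t)
    (A B C A' B' C' : ℝ → ℝ)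
    (dA : ∀ t ∈ Set.Icc 0 T, HasDerivAt A (A' t) t)
    (dB : ∀ t ∈ Set.Icc 0 T, HasDerivAt B (B' t) t)
    (dC : ∀ t ∈ Set.Icc 0 T, HasDerivAt C (C' t) t)
    (hV : ∀ t, 0 < t → t < T →
      A' t * ‖f t‖ ^ 2 + 2 * A t * ⟪f t, g t⟫ + B' t * ⟪f t, w t⟫
       + B t * (⟪g t, w t⟫ - ‖f t‖ ^ 2) + C' t * ‖w t‖ ^ 2 - 2 * C t * ⟪f t, w t⟫ ≤ 0) :
    A T * ‖f T‖ ^ 2 + B T * ⟪f T, w T⟫ + C T * ‖w T‖ ^ 2 ≤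
      A 0 * ‖f 0‖ ^ 2 + B 0 * ⟪f 0, w 0⟫ + C 0 * ‖w 0‖ ^ 2 := by
  have hsub : Set.Icc 0 T ⊆ Set.Ici (0:ℝ) := fun x hx => hx.1
  have hf' := hf.mono hsub
  have hw' := hw.mono hsub
  have cA : ContinuousOn A (Set.Icc 0 T) := fun t ht => (dA t ht).continuousAt.continuousWithinAt
  have cB : ContinuousOn B (Set.Icc 0 T) := fun t ht => (dB t ht).continuousAt.continuousWithinAt
  have cC : ContinuousOn C (Set.Icc 0 T) := fun t ht => (dC t ht).continuousAt.continuousWithinAt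
  let V : ℝ → ℝ := fun t => A t * ⟪f t, f t⟫ + B t * ⟪f t, w t⟫ + C t * ⟪w t, w t⟫
  have hanti : AntitoneOn V (Set.Icc 0 T) := by
    have hd : ∀ t ∈ interior (Set.Icc 0 T), HasDerivAt V
        ((A' t * ⟪f t, f t⟫ + A t * (⟪f t, g t⟫ + ⟪g t, f t⟫))
          + (B' t * ⟪f t, w t⟫ + B t * (⟪f t, -f t⟫ + ⟪g t, w t⟫))
          + (C' t * ⟪w t, w t⟫ + C t * (⟪w t, -f t⟫ + ⟪-f t, w t⟫))) t := by
      intro t ht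
      rw [interior_Icc] at ht
      have ht' : t ∈ Set.Icc 0 T := ⟨ht.1.le, ht.2.le⟩
      have e1 := df t ht.1
      have e2 := dw t ht.1
      exact (((dA t ht').mul (e1.inner ℝ e1)).add ((dB t ht').mul (e1.inner ℝ e2))).add
        ((dC t ht').mul (e2.inner ℝ e2))
    refine antitoneOn_of_deriv_nonpos (convex_Icc 0 T) ?_ ?_ ?_
    · exact ((cA.mul (hf'.inner hf')).add (cB.mul (hf'.inner hw'))).add
        (cC.mul (hw'.inner hw'))
    · intro t ht
      exact (hd t ht).differentiableAt.differentiableWithinAt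
    · intro t ht
      rw [(hd t ht).deriv]
      rw [interior_Icc] at ht
      have := hV t ht.1 ht.2
      simp only [inner_neg_left, inner_neg_right, real_inner_self_eq_norm_sq]
      rw [real_inner_comm (f t) (g t), real_inner_comm (f t) (w t)] at *
      linarith
  have := hanti (Set.left_mem_Icc.2 hT) (Set.right_mem_Icc.2 hT) hT
  simpa only [V, real_inner_self_eq_norm_sq] using this

/-- Short-time bound `(1+T)‖f T‖ ≤ ‖w 0‖`. -/
lemma short_time (w f g : ℝ → E) (T : ℝ) (hT : 0 ≤ T) (hT2 : T ≤ 12 / 5)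
    (hw : ContinuousOn w (Set.Ici 0)) (hf : ContinuousOn f (Set.Ici 0))
    (dw : ∀ t, 0 < t → HasDerivAt w (-f t) t) (df : ∀ t, 0 < t → HasDerivAt f (g t) t)
    (h1 : ∀ t, 0 ≤ t → ‖f t‖ ^ 2 ≤ ⟪f t, w t⟫)
    (h2 : ∀ t, 0 < t → ‖g t‖ ^ 2 ≤ -⟪f t, g t⟫) :
    (1 + T) ^ 2 * ‖f T‖ ^ 2 ≤ ‖w 0‖ ^ 2 := by
  obtain ⟨c, hc⟩ : ∃ c, c = 1 + T := ⟨_, rfl⟩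
  have hc1 : 1 ≤ c := by linarith
  have hc0 : 0 < c := by linarith
  obtain ⟨γ, hγ⟩ : ∃ γ, γ = 2 / c ^ 2 := ⟨_, rfl⟩
  have hγ0 : 0 < γ := by rw [hγ]; positivity
  have hγc : γ * c ^ 2 = 2 := by rw [hγ]; field_simp
  have hγT : γ * T ^ 2 ≤ 1 := by
    have : 2 * T ^ 2 ≤ c ^ 2 := by rw [hc]; nlinarith
    nlinarith
  have hγc1 : 9 / 4 ≤ 4 * c * γ := by
    have h : 4 * c * γ * c = 8 := by nlinarith
    by_contra hlt
    push Not at hlt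
    nlinarith
  let C : ℝ → ℝ := fun t => 1 - γ * t ^ 2
  let r : ℝ → ℝ := fun t => c - (1 - γ * t ^ 2) * (c - t)
  let r' : ℝ → ℝ := fun t => 2 * γ * t * (c - t) + (1 - γ * t ^ 2)
  have dC : ∀ t, HasDerivAt C (-(2 * γ * t)) t := by
    intro t
    have := ((hasDerivAt_id t).pow 2).const_mul γ |>.const_sub 1
    refine this.congr_deriv ?_
    simp; ring
  have dy : ∀ t : ℝ, HasDerivAt (fun t => c - t) (-1) t := fun t =>
    (hasDerivAt_id t).const_sub c
  have dr : ∀ t, HasDerivAt r (r' t) t := by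
    intro t
    refine (((dC t).mul (dy t)).const_sub c).congr_deriv ?_
    simp only [C, r']; ring
  have key := lyap w f g T hT hw hf dw df (fun t => c * t - r t * (c - t)) (fun t => 2 * r t) C
    (fun t => c - (r' t * (c - t) + r t * (-1))) (fun t => 2 * r' t) (fun t => -(2 * γ * t))
    (fun t _ => by
      have := ((hasDerivAt_id t).const_mul c).sub ((dr t).mul (dy t))
      refine this.congr_deriv ?_
      simp)
    (fun t _ => (dr t).const_mul 2) (fun t _ => dC t) (by
      intro t ht0 htT
      have q1 := quad_nonneg (f t) (g t) (w t) (2 * c * t) (r t * (c - t)) (-r t)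
      have q2 := quad_nonneg (f t) (g t) (w t) 0 (c - t) (-1)
      have hrr : r t = t * (1 + γ * (t * (c - t))) := by simp only [r]; ring
      have hr2 : r t ^ 2 ≤ (2 * c * t) * (2 * γ * t) := by
        rw [hrr]
        have a1 : 0 ≤ t * (c - t) := mul_nonneg ht0.le (by linarith)
        have a2 : t * (c - t) ≤ c ^ 2 / 4 := by nlinarith [sq_nonneg (t - c / 2)]
        have a3 : γ * (t * (c - t)) ≤ 1 / 2 := by nlinarith
        have a4 : 0 ≤ γ * (t * (c - t)) := by positivity
        have a5 : (1 + γ * (t * (c - t))) ^ 2 ≤ 9 / 4 := by nlinarith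
        rw [mul_pow]
        have a6 := mul_le_mul_of_nonneg_left (a5.trans hγc1) (sq_nonneg t)
        refine a6.trans (le_of_eq ?_)
        ring
      have hν : 0 < 2 * c * t := by positivity
      have h2t := h2 t ht0
      have q3 := mul_nonneg (sub_nonneg.2 hr2) q2
      have q4 := mul_nonneg (sq_nonneg (2 * c * t)) (sub_nonneg.2 h2t)
      refine nonpos_of_mul_nonpos_right ?_ hν
      have hr'e : r' t = 2 * γ * t * (c - t) + (1 - γ * t ^ 2) := rfl
      have hCe : C t = 1 - γ * t ^ 2 := rfl
      have hre : r t = c - (1 - γ * t ^ 2) * (c - t) := rfl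
      have hcomm : ⟪g t, f t⟫ = ⟪f t, g t⟫ := real_inner_comm _ _
      generalize ‖f t‖ ^ 2 = ff at *
      generalize ‖g t‖ ^ 2 = gg at *
      generalize ‖w t‖ ^ 2 = ww at *
      generalize ⟪f t, g t⟫ = fg at *
      generalize ⟪g t, w t⟫ = gw at *
      generalize ⟪f t, w t⟫ = fw at *
      refine le_trans (le_of_eq ?_) (neg_nonpos.2 (add_nonneg q1 (add_nonneg q3 q4)))
      simp only [hr'e, hCe, hre]
      ring)
  have hr0 : r 0 = 0 := by simp [r]
  have hC0 : C 0 = 1 := by simp [C]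
  simp only [hr0, hC0] at key
  have hCT : C T = 1 - γ * T ^ 2 := rfl
  have hCT0 : 0 ≤ C T := by rw [hCT]; linarith
  have hy : c - T = 1 := by linarith
  have hrT : r T = c - C T := by simp only [r, C, hy]; ring
  have hrT0 : 0 ≤ r T := by rw [hrT, hCT]; nlinarith
  have hff := h1 T hT
  have hww : ‖f T‖ ^ 2 ≤ ‖w T‖ ^ 2 := by
    have := quad_nonneg (f T) 0 (w T) 0 1 (-1)
    simp at this
    nlinarith
  rw [hy] at key
  have k1 := mul_nonneg hrT0 (sub_nonneg.2 hff)
  have k2 := mul_nonneg hCT0 (sub_nonneg.2 hww)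
  have : (1 + T) ^ 2 = c * T - r T * 1 + 2 * r T + C T := by rw [hrT, hc]; ring
  rw [this]
  linarith

/-- Long-time bound. -/
lemma long_time (w f g : ℝ → E) (T : ℝ) (hT : 14 / 5 ≤ T)
    (hw : ContinuousOn w (Set.Ici 0)) (hf : ContinuousOn f (Set.Ici 0))
    (dw : ∀ t, 0 < t → HasDerivAt w (-f t) t) (df : ∀ t, 0 < t → HasDerivAt f (g t) t)
    (h1 : ∀ t, 0 ≤ t → ‖f t‖ ^ 2 ≤ ⟪f t, w t⟫)
    (h2 : ∀ t, 0 < t → ‖g t‖ ^ 2 ≤ -⟪f t, g t⟫) :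
    4 * T * ‖f T‖ ^ 2 ≤ ‖w 0‖ ^ 2 := by
  obtain ⟨M, hM⟩ : ∃ M, M = 5 * T / 7 := ⟨_, rfl⟩
  have hM2 : 2 ≤ M := by linarith
  have hM0 : 0 < M := by linarith
  have hTM : T = 7 / 5 * M := by linarith
  let L : ℝ → ℝ := fun t => Real.log ((M + t) / M)
  let C : ℝ → ℝ := fun t => 2 - (M + t) / M + L t
  let φ : ℝ → ℝ := fun t => 3 - 3 * M / (M + t) - L t - L t * M / (M + t)
  have ds : ∀ t : ℝ, HasDerivAt (fun t => M + t) 1 t := fun t => (hasDerivAt_id t).const_add M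
  have dL : ∀ t, 0 ≤ t → HasDerivAt L (1 / (M + t)) t := by
    intro t ht
    have hs : 0 < M + t := by linarith
    refine (((ds t).div_const M).log (by positivity)).congr_deriv ?_
    field_simp
  have dC : ∀ t, 0 ≤ t → HasDerivAt C (-(1 / M) + 1 / (M + t)) t := by
    intro t ht
    refine ((((ds t).div_const M).const_sub 2).add (dL t ht)).congr_deriv ?_
    ring
  have dφ : ∀ t, 0 ≤ t → HasDerivAt φ (C t * M / (M + t) ^ 2) t := by
    intro t ht
    have hs : 0 < M + t := by linarith
    have e1 := (hasDerivAt_const t (3 * M)).div (ds t) hs.ne'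
    have e2 := ((dL t ht).mul_const M).div (ds t) hs.ne'
    refine (((e1.const_sub 3).sub (dL t ht)).sub e2).congr_deriv ?_
    simp only [C]
    field_simp
    ring
  have hLlow : ∀ t, 0 ≤ t → 2 * t / (2 * M + t) ≤ L t := by
    intro t ht
    have := Real.le_log_one_add_of_nonneg (x := t / M) (by positivity)
    have e : 1 + t / M = (M + t) / M := by field_simp
    rw [e] at this
    refine le_trans (le_of_eq ?_) this
    field_simp
    ring
  have hC : ∀ t, 0 ≤ t → t ≤ T → 0 ≤ C t := by
    intro t ht htT
    have h := hLlow t ht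
    have : 0 ≤ 2 - (M + t) / M + 2 * t / (2 * M + t) := by
      have e : 2 - (M + t) / M + 2 * t / (2 * M + t)
        = ((M - t) * (2 * M + t) + 2 * t * M) / (M * (2 * M + t)) := by
        field_simp; ring
      rw [e]
      apply div_nonneg _ (by positivity)
      nlinarith
    simp only [C]; linarith
  have hφ0' : φ 0 = 0 := by simp [φ, L, hM0.ne']
  have hφ0 : ∀ t, 0 ≤ t → t ≤ T → 0 ≤ φ t := by
    have hmono : MonotoneOn φ (Set.Icc 0 T) := by
      refine monotoneOn_of_deriv_nonneg (convex_Icc 0 T)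
        (fun t ht => (dφ t ht.1).continuousAt.continuousWithinAt) ?_ ?_
      · intro t ht
        rw [interior_Icc] at ht
        exact (dφ t ht.1.le).differentiableAt.differentiableWithinAt
      · intro t ht
        rw [interior_Icc] at ht
        rw [(dφ t ht.1.le).deriv]
        have := hC t ht.1.le ht.2.le
        positivity
    intro t ht htT
    have := hmono (Set.left_mem_Icc.2 (ht.trans htT)) ⟨ht, htT⟩ ht
    rwa [hφ0'] at this
  have hφup : ∀ t, 0 ≤ t → φ t ≤ 1 - M / (M + t) := by
    intro t ht
    have hs : 0 < M + t := by linarith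
    have h := hLlow t ht
    have e : 1 - M / (M + t) - φ t = (L t - 2 * t / (2 * M + t)) * ((2 * M + t) / (M + t)) := by
      simp only [φ]; field_simp; ring
    have : 0 ≤ (L t - 2 * t / (2 * M + t)) * ((2 * M + t) / (M + t)) :=
      mul_nonneg (by linarith) (by positivity)
    linarith
  let S : ℝ → ℝ := fun t => 2 * (M + t) ^ 2 / M * φ t
  let B : ℝ → ℝ := fun t => 4 * (M + t) / M * φ t
  have dS : ∀ t, 0 ≤ t → HasDerivAt S (B t + 2 * C t) t := by
    intro t ht
    have hs : 0 < M + t := by linarith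
    refine ((((((ds t).pow 2).const_mul 2).div_const M)).mul (dφ t ht)).congr_deriv ?_
    simp only [B]
    simp
    field_simp
    ring
  have dB : ∀ t, 0 ≤ t → HasDerivAt B (4 / M * φ t + 4 * C t / (M + t)) t := by
    intro t ht
    have hs : 0 < M + t := by linarith
    refine (((((ds t).const_mul 4).div_const M)).mul (dφ t ht)).congr_deriv ?_
    field_simp
  have hT0 : 0 ≤ T := by linarith
  have key := lyap w f g T hT0 hw hf dw df (fun t => S t - B t) B C
    (fun t => B t + 2 * C t - (4 / M * φ t + 4 * C t / (M + t)))
    (fun t => 4 / M * φ t + 4 * C t / (M + t)) (fun t => -(1 / M) + 1 / (M + t))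
    (fun t ht => (dS t ht.1).sub (dB t ht.1)) (fun t ht => dB t ht.1) (fun t ht => dC t ht.1) (by
      intro t ht0 htT
      obtain ⟨s, hs⟩ : ∃ s, s = M + t := ⟨_, rfl⟩
      have hs0 : 0 < s := by linarith
      have hs2 : 2 ≤ s := by linarith
      have hSe : S t = 2 * s ^ 2 / M * φ t := by rw [hs]
      have hBe : B t = 4 * s / M * φ t := by rw [hs]
      have hCt := hC t ht0.le htT.le
      have hφt := hφ0 t ht0.le htT.le
      have hφu := hφup t ht0.le
      have q1 := quad_nonneg (f t) (g t) (w t) 1 (1 / s) (-(1 / (2 * s)))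
      have hν : 0 ≤ 4 * s ^ 2 / M * φ t := by positivity
      have p1 := mul_nonneg hν q1
      have p2 := mul_nonneg hν (sub_nonneg.2 (h2 t ht0))
      have p3 : 0 ≤ (2 * C t * (1 - 2 / s)) * (⟪f t, w t⟫ - ‖f t‖ ^ 2) := by
        refine mul_nonneg (mul_nonneg (by linarith) ?_) (sub_nonneg.2 (h1 t ht0.le))
        rw [sub_nonneg, div_le_one hs0]; exact hs2
      have p4 : 0 ≤ ((1 - M / s - φ t) / M) * ‖w t‖ ^ 2 := by
        refine mul_nonneg (div_nonneg ?_ hM0.le) (by positivity)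
        rw [hs]; linarith
      simp only [hSe, hBe, ← hs]
      generalize ‖f t‖ ^ 2 = ff at *
      generalize ‖g t‖ ^ 2 = gg at *
      generalize ‖w t‖ ^ 2 = ww at *
      generalize ⟪f t, g t⟫ = fg at *
      generalize ⟪g t, w t⟫ = gw at *
      generalize ⟪f t, w t⟫ = fw at *
      refine le_trans (le_of_eq ?_)
        (neg_nonpos.2 (add_nonneg p1 (add_nonneg p2 (add_nonneg p3 p4))))
      field_simp
      ring)
  have hS0 : S 0 = 0 := by simp [S, hφ0']
  have hB0 : B 0 = 0 := by simp [B, hφ0']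
  have hC0 : C 0 = 1 := by simp [C, L, hM0.ne']; norm_num
  simp only [hS0, hB0, hC0] at key
  have hCT := hC T hT0 le_rfl
  have hφT : 35 / 72 ≤ φ T := by
    have e1 : (M + T) / M = 12 / 5 := by rw [hTM]; field_simp; norm_num
    have e2 : M / (M + T) = 5 / 12 := by rw [hTM]; field_simp; norm_num
    have hl : Real.log (12 / 5) ≤ 0.89 := by
      have hexp := Real.exp_one_gt_d9
      have : Real.log (12 / 5 / Real.exp 1) ≤ 12 / 5 / Real.exp 1 - 1 :=
        Real.log_le_sub_one_of_pos (by positivity)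
      rw [Real.log_div (by norm_num) (by positivity), Real.log_exp] at this
      have h3 : 12 / 5 / Real.exp 1 ≤ 0.89 := by
        rw [div_le_iff₀ (by positivity)]; linarith
      linarith
    have e3 : φ T = 3 - 3 * (M / (M + T)) - L T - L T * (M / (M + T)) := by
      simp only [φ]; ring
    have e4 : L T = Real.log (12 / 5) := by simp only [L, e1]
    rw [e3, e2, e4]
    linarith
  have hBT : 0 ≤ B T := by
    have := hφ0 T hT0 le_rfl
    simp only [B]; positivity
  have hST : 4 * T ≤ S T := by
    have : S T = 288 / 25 * M * φ T := by
      simp only [S]; rw [hTM]; field_simp; ring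
    have h5 := mul_le_mul_of_nonneg_left hφT hM0.le
    rw [this]
    linarith
  have k1 := mul_nonneg hBT (sub_nonneg.2 (h1 T hT0))
  have k2 := mul_nonneg hCT (sq_nonneg ‖w T‖)
  have k3 := mul_nonneg (sub_nonneg.2 hST) (sq_nonneg ‖f T‖)
  linarith

lemma all_time (w f g : ℝ → E) (T : ℝ) (hT : 0 ≤ T)
    (hw : ContinuousOn w (Set.Ici 0)) (hf : ContinuousOn f (Set.Ici 0))
    (dw : ∀ t, 0 < t → HasDerivAt w (-f t) t) (df : ∀ t, 0 < t → HasDerivAt f (g t) t)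
    (h1 : ∀ t, 0 ≤ t → ‖f t‖ ^ 2 ≤ ⟪f t, w t⟫)
    (h2 : ∀ t, 0 < t → ‖g t‖ ^ 2 ≤ -⟪f t, g t⟫) :
    4 * T * ‖f T‖ ^ 2 ≤ ‖w 0‖ ^ 2 := by
  rcases le_total (14 / 5) T with h | h
  · exact long_time w f g T h hw hf dw df h1 h2
  rcases le_total T (12 / 5) with h' | h'
  · have := short_time w f g T hT h' hw hf dw df h1 h2
    nlinarith [mul_nonneg (sq_nonneg (1 - T)) (sq_nonneg ‖f T‖)]
  · have k := short_time w f g (12 / 5) (by norm_num) le_rfl hw hf dw df h1 h2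
    have hanti : AntitoneOn (fun t => ⟪f t, f t⟫) (Set.Ici (0:ℝ)) := by
      refine antitoneOn_of_deriv_nonpos (convex_Ici 0) (hf.inner hf) ?_ ?_
      · intro t ht
        rw [interior_Ici] at ht
        exact ((df t ht).inner ℝ (df t ht)).differentiableAt.differentiableWithinAt
      · intro t ht
        rw [interior_Ici] at ht
        rw [((df t ht).inner ℝ (df t ht)).deriv, real_inner_comm (f t) (g t)]
        have h2t := h2 t ht
        rw [real_inner_comm] at h2t
        nlinarith [sq_nonneg ‖g t‖, real_inner_comm (f t) (g t)]
    have m := hanti (Set.mem_Ici.2 (by norm_num : (0:ℝ) ≤ 12 / 5)) (Set.mem_Ici.2 hT) h'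
    simp only [real_inner_self_eq_norm_sq] at m
    nlinarith [sq_nonneg ‖f T‖]

end Helpers

/-- Last-iterate convergence in continuous time for `ρ`-comonotone operators,
`ρ ∈ (−1, 0]`: along the continuous-time extragradient dynamics
`u̇(t) = −F(z(t))`, `v(t) = z_0 + u(t)`, `z(t) + F(z(t)) = v(t)`, with `F(z*) = 0`
and `‖z_0 − z*‖ ≤ D`, we have `‖F(z(t))‖² ≤ D²/(2(2 + 2ρ)t)` for all `t > 0`. -/
theorem comonotone_continuous_time_last_iterate {d : ℕ}
    (ρ D : ℝ) (hρ₁ : -1 < ρ) (hρ₂ : ρ ≤ 0) (hD : 0 < D)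
    (F : EuclideanSpace ℝ (Fin d) → EuclideanSpace ℝ (Fin d))
    (hF : ContDiff ℝ 1 F)
    (hcomono : ∀ z₁ z₂ : EuclideanSpace ℝ (Fin d),
      ⟪F z₁ - F z₂, z₁ - z₂⟫ ≥ ρ * ‖F z₁ - F z₂‖ ^ 2)
    (zstar z₀ : EuclideanSpace ℝ (Fin d)) (hzstar : F zstar = 0)
    (hdist : ‖z₀ - zstar‖ ≤ D)
    (u v z : ℝ → EuclideanSpace ℝ (Fin d)) (hu0 : u 0 = 0)
    (huC1 : ContDiffOn ℝ 1 u (Set.Ici 0)) (hvC1 : ContDiffOn ℝ 1 v (Set.Ici 0))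
    (hzC1 : ContDiffOn ℝ 1 z (Set.Ici 0))
    (hdyn1 : ∀ t ∈ Set.Ici (0 : ℝ), HasDerivWithinAt u (-F (z t)) (Set.Ici 0) t)
    (hdyn2 : ∀ t : ℝ, 0 ≤ t → v t = z₀ + u t)
    (hdyn3 : ∀ t : ℝ, 0 ≤ t → z t + F (z t) = v t) :
    ∀ t : ℝ, 0 < t → ‖F (z t)‖ ^ 2 ≤ D ^ 2 / (2 * (2 + 2 * ρ) * t) := by
  have hc : 0 < 1 + ρ := by linarith
  obtain ⟨c, hce⟩ : ∃ c, c = 1 + ρ := ⟨_, rfl⟩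
  rw [← hce] at hc
  -- cocoercivity along the trajectory
  have coco : ∀ a b p q : EuclideanSpace ℝ (Fin d), a + F a = p → b + F b = q →
      c * ‖F a - F b‖ ^ 2 ≤ ⟪F a - F b, p - q⟫ := by
    intro a b p q hp hq
    have h := hcomono a b
    have e : p - q = (a - b) + (F a - F b) := by rw [← hp, ← hq]; abel
    rw [e, inner_add_right, real_inner_self_eq_norm_sq, hce]
    linarith
  have hv3 : ∀ t, 0 ≤ t → z t + F (z t) = z₀ + u t := fun t ht => by
    rw [hdyn3 t ht, hdyn2 t ht]
  have hzd : ∀ t, 0 < t → DifferentiableAt ℝ z t := fun t ht =>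
    (hzC1.differentiableOn one_ne_zero).differentiableAt (Ici_mem_nhds ht)
  have hud : ∀ t, 0 < t → HasDerivAt u (-F (z t)) t := fun t ht =>
    (hdyn1 t ht.le).hasDerivAt (Ici_mem_nhds ht)
  let f : ℝ → EuclideanSpace ℝ (Fin d) := fun t => F (z t)
  let g : ℝ → EuclideanSpace ℝ (Fin d) := fun t => deriv f t
  have hfd : ∀ t, 0 < t → HasDerivAt f (g t) t := fun t ht =>
    (((hF.differentiable one_ne_zero) (z t)).comp t (hzd t ht)).hasDerivAt
  have hfc : ContinuousOn f (Set.Ici 0) := hF.continuous.comp_continuousOn hzC1.continuousOn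
  have hgf : ∀ t, 0 < t → c * ‖g t‖ ^ 2 ≤ -⟪g t, f t⟫ := by
    intro t ht
    have l1 := hasDerivAt_iff_tendsto_slope.1 (hfd t ht)
    have l2 := hasDerivAt_iff_tendsto_slope.1 (hud t ht)
    have l3 := l1.inner l2 (𝕜 := ℝ)
    have l4 := (l1.norm.pow 2).const_mul c
    have e : -⟪g t, f t⟫ = ⟪g t, -F (z t)⟫ := by rw [inner_neg_right]
    rw [e]
    refine le_of_tendsto_of_tendsto l4 l3 ?_
    have hn : ∀ᶠ x in nhdsWithin t {t}ᶜ, 0 < x :=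
      nhdsWithin_le_nhds (lt_mem_nhds ht)
    filter_upwards [hn] with x hx
    have h := coco (z x) (z t) _ _ (hv3 x hx.le) (hv3 t ht.le)
    rw [add_sub_add_left_eq_sub] at h
    simp only [slope_def_module, real_inner_smul_left, real_inner_smul_right, norm_smul, mul_pow,
      Real.norm_eq_abs, sq_abs]
    have := mul_le_mul_of_nonneg_left h (sq_nonneg (x - t)⁻¹)
    simp only [f]
    linarith
  intro t ht
  have hmap : ContinuousOn (fun s : ℝ => c * s) (Set.Ici 0) := by fun_prop
  have hmaps : Set.MapsTo (fun s : ℝ => c * s) (Set.Ici 0) (Set.Ici 0) := fun s hs =>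
    mul_nonneg hc.le hs
  have dlin : ∀ s : ℝ, HasDerivAt (fun s : ℝ => c * s) c s := fun s => by
    simpa using (hasDerivAt_id s).const_mul c
  have key := all_time (fun s => z₀ + u (c * s) - zstar) (fun s => c • f (c * s))
    (fun s => c • c • g (c * s)) (t / c) (by positivity)
    ((continuousOn_const.add (huC1.continuousOn.comp hmap hmaps)).sub continuousOn_const)
    ((hfc.comp hmap hmaps).const_smul c)
    (fun s hs => by
      have := (hud (c * s) (by positivity)).scomp s (dlin s)
      refine ((this.const_add z₀).sub_const zstar).congr_deriv ?_
      simp [f])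
    (fun s hs => ((hfd (c * s) (by positivity)).scomp s (dlin s)).const_smul c)
    (fun s hs => by
      have hcs : 0 ≤ c * s := by positivity
      have h := coco (z (c * s)) zstar _ _ (hv3 _ hcs) rfl
      rw [hzstar, sub_zero, add_zero] at h
      simp only [norm_smul, real_inner_smul_left, mul_pow, Real.norm_eq_abs, sq_abs, f]
      have := mul_le_mul_of_nonneg_left h hc.le
      linarith)
    (fun s hs => by
      have h := hgf (c * s) (by positivity)
      rw [real_inner_comm] at h
      simp only [norm_smul, real_inner_smul_left, real_inner_smul_right, mul_pow,
        Real.norm_eq_abs, sq_abs]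
      have := mul_le_mul_of_nonneg_left h (pow_nonneg hc.le 3)
      linarith)
  have ec : c * (t / c) = t := by field_simp
  simp only [ec, mul_zero, hu0, add_zero, norm_smul, mul_pow, Real.norm_eq_abs, sq_abs, f] at key
  have hD2 : ‖z₀ - zstar‖ ^ 2 ≤ D ^ 2 := pow_le_pow_left₀ (norm_nonneg _) hdist 2
  have e2 : 2 * (2 + 2 * ρ) * t = 4 * c * t := by rw [hce]; ring
  rw [e2, le_div_iff₀ (by positivity)]
  have e3 : 4 * (t / c) * (c ^ 2 * ‖F (z t)‖ ^ 2) = ‖F (z t)‖ ^ 2 * (4 * c * t) := by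
    field_simp
  linarith
end
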